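/- (Dynamic Programming Principle) Assume φ satisfies the LSCC property, 1/(16ε) ≥ B, and x ∈ X satisfies V_ε(x) < ∞. Then for every T > 0, V_ε(x) = min_{u ∈ 𝒜_x^ε} ( ∫₀^T ( (ε/2)|u'|²(t) + φ(u(t)) ) dμ_ε(t) + V_ε(u(T)) e^{−T/ε} ). In particular, every minimizer u_ε of I_ε over 𝒜_x^ε also minimizes the right-hand side, satisfies V_ε(x) = ∫₀^T ( (ε/2)|u_ε'|² + φ(u_ε) ) dμ_ε + V_ε(u_ε(T)) e^{−T/ε} for all T > 0, and for every T > 0 the time-shifted curve t ↦ u_ε(t+T) is a minimizer of I_ε over 𝒜_{u_ε(T)}^ε. -/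

import Mathlib

/-!
The dynamic programming principle rests on two facts.

*Splitting.* The measure `μ_ε` is memoryless, so that
`I_ε[u] = ∫_{(0,T)} ((ε/2)|u'|² + φ(u)) dμ_ε + e^{-T/ε} I_ε[u(· + T)]` for admissible `u`
(`SeqSetting.WEDfun_split`), and both shifts (`Admissible.shift`) and concatenations
(`Admissible.concat`) of admissible curves are admissible. The integrals take values in `EReal`; no
`∞ - ∞` arises because the negative part of the integrand is integrable (`SeqSetting.eIntegral_eq`).

*Existence of minimizers* at every point where `V_ε` is finite (`SeqSetting.exists_minimizer`).
With `R(t) = ∫₀ᵗ m` the length travelled by a curve from `x` of speed `m`, the integrand is the sum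
of the shifted potential `φ(u) + B R² + Q(x)`, nonnegative by coercivity, and of
`(ε/2) m² - B R² - Q(x)`. Hardy's inequality `∫ R² dμ_ε ≤ 4ε² ∫ m² dμ_ε` (`hardy_lintegral`) and
`B ≤ 1/(16ε)` make the second term a coercive and convex functional of `m ∈ L²(μ_ε)`
(`quadPart_ge`, `quadPart_expand`). A minimizing sequence therefore has speeds converging weakly to
some `g` (`exists_weak_limit`), and is equi-Hölder on bounded intervals, hence has a pointwise
limit `w` in the auxiliary topology (`SeqSetting.exists_pointwise_limit`). Fatou's lemma and
convexity bound the energy of the pair `(w, g)` by `V_ε(x)`, and `w` has a metric derivative which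
is at most `|g|` almost everywhere (`exists_metricDeriv`, `exists_admissible`).

Replacing a competitor after time `T` by a minimizer started at `u(T)` gives
`V_ε(x) ≤ ∫_{(0,T)} … dμ_ε + e^{-T/ε} V_ε(u(T))` (`SeqSetting.Veps_le_split`). For a minimizer `u`
of `I_ε`, the right-hand side is at most `I_ε[u] = V_ε(x)` by the splitting, so equality holds
throughout; all quantities being finite, this forces `I_ε[u(· + T)] = V_ε(u(T))`
(`SeqSetting.minimizer_split`).
-/

open MeasureTheory Filter Topology Set ENNReal

noncomputable section

namespace WED

variable {X : Type*} [MetricSpace X]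

/-- The exponential probability measure `μ_ε = ε⁻¹ e^{-t/ε} dt` on `(0,∞)`. -/
def expMeasure (ε : ℝ) : Measure ℝ :=
  (volume.restrict (Ioi (0:ℝ))).withDensity fun t => ENNReal.ofReal (ε⁻¹ * Real.exp (-t / ε))

/-- The positive part of an extended real, as an extended nonnegative real. -/
def epos (x : EReal) : ℝ≥0∞ := if x = ⊤ then ⊤ else ENNReal.ofReal x.toReal

/-- The absolute value of an extended real, as an extended nonnegative real. -/
def eabs (x : EReal) : ℝ≥0∞ := epos x ⊔ epos (-x)

/-- The (extended-real valued) integral of an extended-real valued function, defined as the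
difference between the integrals of the positive and of the negative part. -/
def eIntegral (μ : Measure ℝ) (f : ℝ → EReal) : EReal :=
  ((∫⁻ t, epos (f t) ∂μ : ℝ≥0∞) : EReal) - ((∫⁻ t, epos (-f t) ∂μ : ℝ≥0∞) : EReal)

/-- `m` is *the* metric derivative of the curve `u` on the set `I ⊆ ℝ`:  `m` is a nonnegative
locally integrable function, `d(u s, u t) ≤ ∫_s^t m` (so that `u` is absolutely continuous),
and `m t` is the limit of the difference quotients `d(u s, u t)/|s-t|` at a.e. `t ∈ I`. -/
structure IsMetricDerivOn (u : ℝ → X) (m : ℝ → ℝ) (I : Set ℝ) : Prop where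
  nonneg : ∀ t, 0 ≤ m t
  locInt : ∀ s ∈ I, ∀ t ∈ I, IntegrableOn m (Icc s t) volume
  dist_le : ∀ s ∈ I, ∀ t ∈ I, s ≤ t → dist (u s) (u t) ≤ ∫ r in Icc s t, m r
  limit : ∀ᵐ t ∂(volume.restrict I),
    Tendsto (fun s => dist (u s) (u t) / |s - t|) (𝓝[I \ {t}] t) (𝓝 (m t))

/-- `u ∈ AC²_loc(I; X)`, with metric derivative `m`. -/
def AC2LocOn (u : ℝ → X) (m : ℝ → ℝ) (I : Set ℝ) : Prop :=
  IsMetricDerivOn u m I ∧ ∀ s ∈ I, ∀ t ∈ I, IntegrableOn (fun r => m r ^ 2) (Icc s t) volume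

/-- `u ∈ AC²(I; X)`, with metric derivative `m`. -/
def AC2On (u : ℝ → X) (m : ℝ → ℝ) (I : Set ℝ) : Prop :=
  IsMetricDerivOn u m I ∧ IntegrableOn (fun r => m r ^ 2) I volume

/-- The integrand `(ε/2)|u'|²(t) + φ(u(t))` of the WED functional. -/
def wedIntegrand (φ : X → EReal) (ε : ℝ) (u : ℝ → X) (m : ℝ → ℝ) (t : ℝ) : EReal :=
  ((ε / 2 * m t ^ 2 : ℝ) : EReal) + φ (u t)

/-- The WED functional `I_ε[u] = ∫₀^∞ ((ε/2)|u'|² + φ(u)) dμ_ε`. -/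
def WEDfun (φ : X → EReal) (ε : ℝ) (u : ℝ → X) (m : ℝ → ℝ) : EReal :=
  eIntegral (expMeasure ε) (wedIntegrand φ ε u m)

/-- The admissible class `𝒜_x^ε`: curves `u ∈ AC²_loc([0,∞);X)` (with metric derivative `m`)
with `u 0 = x` and `∫₀^∞ |u'|² dμ_ε < ∞`. -/
def Admissible (ε : ℝ) (x : X) (u : ℝ → X) (m : ℝ → ℝ) : Prop :=
  u 0 = x ∧ AC2LocOn u m (Ici 0) ∧
    (∫⁻ t, ENNReal.ofReal (m t ^ 2) ∂expMeasure ε) < ⊤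

/-- The value function `V_ε(x) = inf { I_ε[u] : u ∈ 𝒜_x^ε }`. -/
def Veps (φ : X → EReal) (ε : ℝ) (x : X) : EReal :=
  ⨅ (p : {p : (ℝ → X) × (ℝ → ℝ) // Admissible ε x p.1 p.2}),
    WEDfun φ ε p.1.1 p.1.2

/-- `u` (with metric derivative `m`) minimizes the WED functional `I_ε` over `𝒜_x^ε`. -/
def IsMinimizer (φ : X → EReal) (ε : ℝ) (x : X) (u : ℝ → X) (m : ℝ → ℝ) : Prop :=
  Admissible ε x u m ∧
    ∀ v n, Admissible ε x v n → WEDfun φ ε u m ≤ WEDfun φ ε v n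

/-- The compatibility conditions (MT1), (MT2) between the distance `d` and the auxiliary
topology `σ`. -/
structure Compatible (σ : TopologicalSpace X) : Prop where
  mt1 : ∀ (u v : ℕ → X) (x y : X), Tendsto u atTop (@nhds X σ x) →
    Tendsto v atTop (@nhds X σ y) →
    ENNReal.ofReal (dist x y) ≤ Filter.liminf (fun n => ENNReal.ofReal (dist (u n) (v n))) atTop
  mt2 : ∀ U : Set X, IsOpen[σ] U → ∀ x ∈ U, ∃ V : Set X, IsOpen[σ] V ∧ x ∈ V ∧
    ∃ δ : ℝ, 0 < δ ∧ ∀ y : X, Metric.infDist y V < δ → y ∈ U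

/-- The standard lower semicontinuity–compactness–coercivity (LSCC) assumptions on a proper
functional `φ : X → (-∞,∞]`, with respect to the auxiliary topology `σ`. -/
structure LSCC (σ : TopologicalSpace X) (φ : X → EReal) (ustar : X) (A B : ℝ) : Prop where
  hA : 0 ≤ A
  hB : 0 ≤ B
  proper : ∃ x, φ x ≠ ⊤
  ne_bot : ∀ x, φ x ≠ ⊥
  lsc : ∀ (u : ℕ → X) (x : X), (∃ C : ℝ, ∀ n k, dist (u n) (u k) ≤ C) →
    Tendsto u atTop (@nhds X σ x) → φ x ≤ Filter.liminf (fun n => φ (u n)) atTop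
  cpt : ∀ u : ℕ → X, (∃ C : ℝ, ∀ n, φ (u n) ≤ (C : EReal)) →
    (∃ C : ℝ, ∀ n k, dist (u n) (u k) ≤ C) →
    ∃ (x : X) (j : ℕ → ℕ), StrictMono j ∧ Tendsto (u ∘ j) atTop (@nhds X σ x)
  coercive : ∀ u v : X, ((-(B * dist u v ^ 2 + (B * dist v ustar ^ 2 + A)) : ℝ) : EReal) ≤ φ u

/-- The local (descending) slope `|∂φ|(x) = limsup_{v→x} (φ(x)-φ(v))⁺/d(x,v)`. -/
def slope (φ : X → EReal) (x : X) : ℝ≥0∞ :=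
  Filter.limsup (fun v => epos (φ x - φ v) / ENNReal.ofReal (dist x v)) (𝓝[≠] x)

/-- The relaxed slope `|∂⁻φ|`: the σ-sequential lower semicontinuous envelope of the local
slope along `d`-bounded sequences with bounded energy. -/
def relaxedSlope (σ : TopologicalSpace X) (φ : X → EReal) (x : X) : ℝ≥0∞ :=
  ⨅ (u : ℕ → X) (_ : Tendsto u atTop (@nhds X σ x))
    (_ : ∃ C : ℝ, ∀ n, dist (u n) x ≤ C ∧ φ (u n) ≤ (C : EReal)),
    Filter.liminf (fun n => slope φ (u n)) atTop

/-- `G_ε(x) = sqrt(2(φ(x) - V_ε(x))/ε)` if `V_ε(x) < ∞`, and `∞` otherwise. -/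
def Geps (φ : X → EReal) (ε : ℝ) (x : X) : ℝ≥0∞ :=
  if Veps φ ε x = ⊤ then ⊤
  else (2 * epos (φ x - Veps φ ε x) / ENNReal.ofReal ε) ^ (1/2 : ℝ)

/-- The measure `|u'| dt` on `I` associated with the speed `m` of a curve. -/
def speedMeasure (m : ℝ → ℝ) (I : Set ℝ) : Measure ℝ :=
  (volume.restrict I).withDensity fun t => ENNReal.ofReal (m t)

/-- Membership in `L^p(μ)`, `p ∈ [1,∞]`, for an `ℝ≥0∞`-valued function. -/
def MemLpENN (f : ℝ → ℝ≥0∞) (p : ℝ≥0∞) (μ : Measure ℝ) : Prop :=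
  if p = ⊤ then ∃ C : ℝ≥0∞, C ≠ ⊤ ∧ ∀ᵐ t ∂μ, f t ≤ C
  else (∫⁻ t, f t ^ p.toReal ∂μ) < ⊤

/-- `g` is an `L^p`-moderated upper gradient for `φ`: for every absolutely continuous curve
`u` (with metric derivative `m`) on a compact interval such that `φ∘u ∈ L^p(|u'|dt)` and
`g∘u ∈ L¹(|u'|dt)`, one has `|φ(u t) - φ(u s)| ≤ ∫_s^t g(u r) |u'|(r) dr`. -/
def IsModeratedUpperGradient (φ : X → EReal) (g : X → ℝ≥0∞) (p : ℝ≥0∞) : Prop :=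
  ∀ (a b : ℝ), a ≤ b → ∀ (u : ℝ → X) (m : ℝ → ℝ), IsMetricDerivOn u m (Icc a b) →
    MemLpENN (fun t => eabs (φ (u t))) p (speedMeasure m (Icc a b)) →
    (∫⁻ t in Icc a b, g (u t) * ENNReal.ofReal (m t)) < ⊤ →
    ∀ s ∈ Icc a b, ∀ t ∈ Icc a b, s ≤ t →
      (φ (u t) ≤ φ (u s) + ((∫⁻ r in Icc s t, g (u r) * ENNReal.ofReal (m r) : ℝ≥0∞) : EReal) ∧
       φ (u s) ≤ φ (u t) + ((∫⁻ r in Icc s t, g (u r) * ENNReal.ofReal (m r) : ℝ≥0∞) : EReal))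

/-- A real function `f` is locally absolutely continuous on `[0,∞)` with density `g`. -/
def RealACLoc (f g : ℝ → ℝ) : Prop :=
  (∀ b : ℝ, 0 ≤ b → IntegrableOn g (Icc 0 b) volume) ∧
  ∀ t : ℝ, 0 ≤ t → f t = f 0 + ∫ r in Icc 0 t, g r

/-- A real function `f` belongs to `AC²_loc([0,∞);ℝ)`, with derivative `g`. -/
def RealAC2Loc (f g : ℝ → ℝ) : Prop :=
  RealACLoc f g ∧ ∀ b : ℝ, 0 ≤ b → IntegrableOn (fun t => g t ^ 2) (Icc 0 b) volume

/-- The compact-open topology on curves `[0,∞) → X` induced by the auxiliary topology `σ`. -/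
def compactOpenOf (σ : TopologicalSpace X) : TopologicalSpace (ℝ → X) :=
  TopologicalSpace.generateFrom
    {S | ∃ (K : Set ℝ) (U : Set X), K ⊆ Ici 0 ∧ IsCompact K ∧ IsOpen[σ] U ∧
      S = {f : ℝ → X | MapsTo f K U}}

/-- The WED slope `|∂_w φ|(x) = limsup_{ε↓0} G_ε(x)`. -/
def wedSlope (φ : X → EReal) (x : X) : ℝ≥0∞ :=
  Filter.limsup (fun ε => Geps φ ε x) (𝓝[>] (0:ℝ))

/-- The relaxed WED slope `|∂_w^- φ|`. -/
def relaxedWedSlope (σ : TopologicalSpace X) (φ : X → EReal) (x : X) : ℝ≥0∞ :=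
  ⨅ (u : ℕ → X) (_ : Tendsto u atTop (@nhds X σ x))
    (_ : ∃ C : ℝ, ∀ n, dist (u n) x ≤ C ∧ φ (u n) ≤ (C : EReal)),
    Filter.liminf (fun n => wedSlope φ (u n)) atTop

/-- The φ-conditioned local slope `|∂̃ψ|(x) = limsup_{v→x, φ(v)→φ(x)} (ψ(x)-ψ(v))⁺/d(x,v)`. -/
def condSlope (φ ψ : X → EReal) (x : X) : ℝ≥0∞ :=
  Filter.limsup (fun v => epos (ψ x - ψ v) / ENNReal.ofReal (dist x v))
    ((𝓝[≠] x) ⊓ Filter.comap φ (𝓝 (φ x)))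

/-- `φ` is geodesically `λ`-convex: every pair of points of `D(φ)` is joined by a
constant-speed geodesic along which `φ` is `λ`-convex. -/
def GeodesicLambdaConvex (φ : X → EReal) (lam : ℝ) : Prop :=
  ∀ v₀ v₁ : X, φ v₀ ≠ ⊤ → φ v₁ ≠ ⊤ → ∃ γ : ℝ → X, γ 0 = v₀ ∧ γ 1 = v₁ ∧
    (∀ s ∈ Icc (0:ℝ) 1, ∀ t ∈ Icc (0:ℝ) 1, dist (γ s) (γ t) = |t - s| * dist v₀ v₁) ∧
    ∀ t ∈ Icc (0:ℝ) 1, φ (γ t) ≤ ((1 - t : ℝ) : EReal) * φ v₀ + ((t : ℝ) : EReal) * φ v₁ -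
      ((lam / 2 * t * (1 - t) * dist v₀ v₁ ^ 2 : ℝ) : EReal)

end WED

/-! ### Metric derivatives -/

namespace WED

theorem absCont_of_dist_le {X : Type*} [MetricSpace X] {u : ℝ → X} {G : ℝ → ℝ} {a b : ℝ}
    (hG : AbsolutelyContinuousOnInterval G a b)
    (h : ∀ s t, dist (u s) (u t) ≤ dist (G s) (G t)) : AbsolutelyContinuousOnInterval u a b := by
  refine squeeze_zero (fun E => Finset.sum_nonneg fun _ _ => dist_nonneg)
    (fun E => Finset.sum_le_sum fun i _ => h _ _) hG

/-- A curve whose increments are bounded by integrals of `g` has a metric derivative `m ≤ |g|` a.e.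
The function `m` is the supremum of `|deriv f_n|`, where `f_n = d(u(·), u(q_n))` and `q_n` runs through a dense
sequence of times: each `f_n` is absolutely continuous, integrating `deriv f_n` bounds the increments
of `u` by `∫ m`, and Lebesgue's differentiation theorem gives the upper bound for the difference
quotients, the lower one coming from the `1`-Lipschitz dependence of `f_n` on `u`. -/
theorem exists_metricDeriv {X : Type*} [MetricSpace X] (u : ℝ → X) (g : ℝ → ℝ)
    (hg : LocallyIntegrable g volume)
    (h : ∀ s t, s ≤ t → dist (u s) (u t) ≤ ∫ r in s..t, g r) :
    ∃ m : ℝ → ℝ, Measurable m ∧ (∀ t, 0 ≤ m t) ∧ (∀ᵐ t, m t ≤ |g t|) ∧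
      (∀ s t, s ≤ t → dist (u s) (u t) ≤ ∫ r in s..t, m r) ∧
      ∀ᵐ t, Tendsto (fun s => dist (u s) (u t) / |s - t|) (𝓝[≠] t) (𝓝 (m t)) := by
  have hgi : ∀ a b, IntervalIntegrable g volume a b := fun a b =>
    intervalIntegrable_iff.mpr
      ((hg.integrableOn_isCompact isCompact_uIcc).mono_set uIoc_subset_uIcc)
  set G : ℝ → ℝ := fun t => ∫ r in (0 : ℝ)..t, g r with hGdef
  have hGsub : ∀ s t, ∫ r in s..t, g r = G t - G s := fun s t =>
    (intervalIntegral.integral_interval_sub_left (hgi 0 t) (hgi 0 s)).symm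
  have hdist : ∀ s t, dist (u s) (u t) ≤ dist (G s) (G t) := by
    intro s t
    rw [Real.dist_eq]
    rcases le_total s t with hst | hst
    · have := h s t hst
      rw [hGsub] at this
      exact this.trans ((le_abs_self _).trans (abs_sub_comm _ _).le)
    · have := h t s hst
      rw [hGsub, dist_comm] at this
      exact this.trans (le_abs_self _)
  have hGac : ∀ a b, AbsolutelyContinuousOnInterval G a b := by
    intro a b
    have h1 := (hgi (min (min a b) 0) (max (max a b) 0)
      ).absolutelyContinuousOnInterval_intervalIntegral (c := 0) (mem_uIcc_of_le
        (min_le_right _ _) (le_max_right _ _))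
    refine h1.mono (uIcc_subset_uIcc ?_ ?_)
    · exact mem_uIcc_of_le ((min_le_left _ _).trans (min_le_left _ _))
        ((le_max_left _ _).trans (le_max_left _ _))
    · exact mem_uIcc_of_le ((min_le_left _ _).trans (min_le_right _ _))
        ((le_max_right _ _).trans (le_max_left _ _))
  have hGc : Continuous G := intervalIntegral.continuous_primitive hgi 0
  have huc : Continuous u := by
    rw [continuous_iff_continuousAt]
    intro t
    rw [ContinuousAt, tendsto_iff_dist_tendsto_zero]
    refine squeeze_zero (fun _ => dist_nonneg) (fun s => hdist s t) ?_
    exact tendsto_iff_dist_tendsto_zero.1 (hGc.tendsto t)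
  set q := TopologicalSpace.denseSeq ℝ with hq
  set f : ℕ → ℝ → ℝ := fun n t => dist (u t) (u (q n)) with hf
  have hfu : ∀ n s t, dist (f n s) (f n t) ≤ dist (u s) (u t) := by
    intro n s t
    rw [Real.dist_eq]
    exact abs_dist_sub_le _ _ _
  have hfac : ∀ n a b, AbsolutelyContinuousOnInterval (f n) a b := fun n a b =>
    absCont_of_dist_le (hGac a b) fun s t => (hfu n s t).trans (hdist s t)
  have hfd : ∀ᵐ t, ∀ n, DifferentiableAt ℝ (f n) t := by
    rw [ae_all_iff]
    intro n
    have : ∀ᵐ t, ∀ k : ℕ, t ∈ uIcc (-(k : ℝ)) k → DifferentiableAt ℝ (f n) t := by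
      rw [ae_all_iff]
      exact fun k => (hfac n _ _).ae_differentiableAt
    filter_upwards [this] with t ht
    obtain ⟨k, hk⟩ := exists_nat_ge |t|
    refine ht k ?_
    rw [mem_uIcc]
    exact Or.inl (abs_le.1 hk)
  have hslope : ∀ n t, DifferentiableAt ℝ (f n) t →
      Tendsto (fun s => |f n s - f n t| / |s - t|) (𝓝[≠] t) (𝓝 |deriv (f n) t|) := by
    intro n t hd
    have := (hasDerivAt_iff_tendsto_slope.1 hd.hasDerivAt).abs
    refine this.congr fun s => ?_
    rw [slope_def_field, abs_div]
  have hgslope : ∀ m : ℝ → ℝ, ∀ t, HasDerivAt (fun x => ∫ r in (0 : ℝ)..x, m r) (m t) t →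
      Tendsto (fun s => |(∫ r in (0 : ℝ)..s, m r) - ∫ r in (0 : ℝ)..t, m r| / |s - t|)
        (𝓝[≠] t) (𝓝 |m t|) := by
    intro m t hd
    have := (hasDerivAt_iff_tendsto_slope.1 hd).abs
    refine this.congr fun s => ?_
    rw [slope_def_field, abs_div]
  have hfg : ∀ᵐ t, ∀ n, |deriv (f n) t| ≤ |g t| := by
    filter_upwards [hfd, _root_.LocallyIntegrable.ae_hasDerivAt_integral hg] with t h1 h2 n
    refine le_of_tendsto_of_tendsto (hslope n t (h1 n)) (hgslope g t (h2 0)) ?_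
    refine Eventually.of_forall fun s => ?_
    have := (hfu n s t).trans (hdist s t)
    rw [Real.dist_eq, Real.dist_eq] at this
    dsimp only
    gcongr
  set m : ℝ → ℝ := fun t => ⨆ n, |deriv (f n) t| with hm
  have hmm : Measurable m := Measurable.iSup fun n => (measurable_deriv (f n)).norm
  have hbdd : ∀ᵐ t, BddAbove (range fun n => |deriv (f n) t|) := by
    filter_upwards [hfg] with t ht
    exact ⟨_, by rintro _ ⟨n, rfl⟩; exact ht n⟩
  have hm0 : ∀ t, 0 ≤ m t := fun t => Real.iSup_nonneg fun n => abs_nonneg _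
  have hmg : ∀ᵐ t, m t ≤ |g t| := by
    filter_upwards [hfg] with t ht
    exact ciSup_le ht
  have hmloc : LocallyIntegrable m volume := by
    refine hg.mono hmm.aestronglyMeasurable ?_
    filter_upwards [hmg] with t ht
    rw [Real.norm_eq_abs, Real.norm_eq_abs, abs_of_nonneg (hm0 t)]
    exact ht
  have hmi : ∀ a b, IntervalIntegrable m volume a b := fun a b =>
    intervalIntegrable_iff.mpr
      ((hmloc.integrableOn_isCompact isCompact_uIcc).mono_set uIoc_subset_uIcc)
  have hdm : ∀ s t, s ≤ t → dist (u s) (u t) ≤ ∫ r in s..t, m r := by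
    intro s t hst
    have key : ∀ r, dist (u s) (u r) - dist (u t) (u r) ≤ ∫ r in s..t, m r := by
      intro r
      refine DenseRange.induction_on (TopologicalSpace.denseRange_denseSeq ℝ) r
        (p := fun r => dist (u s) (u r) - dist (u t) (u r) ≤ ∫ r in s..t, m r) ?_ ?_
      · exact isClosed_le (by fun_prop) continuous_const
      · intro n
        have h1 := (hfac n s t).integral_deriv_eq_sub
        have h2 : -(∫ r in s..t, deriv (f n) r) ≤ ∫ r in s..t, m r := by
          rw [← intervalIntegral.integral_neg]
          refine intervalIntegral.integral_mono_ae hst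
            (hfac n s t).intervalIntegrable_deriv.neg (hmi s t) ?_
          filter_upwards [hbdd] with r hr
          exact (neg_le_abs _).trans (le_ciSup hr n)
        rw [h1] at h2
        simp only [f] at h2
        linarith
    have := key t
    rwa [dist_self, sub_zero] at this
  refine ⟨m, hmm, hm0, hmg, hdm, ?_⟩
  filter_upwards [hfd, hbdd, _root_.LocallyIntegrable.ae_hasDerivAt_integral hmloc] with t h1 h2 h3
  have h4 := hgslope m t (h3 0)
  rw [abs_of_nonneg (hm0 t)] at h4
  rw [tendsto_order]
  constructor
  · intro c hc
    obtain ⟨n, hn⟩ := exists_lt_of_lt_ciSup hc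
    filter_upwards [(hslope n t (h1 n)).eventually (lt_mem_nhds hn)] with s hs
    refine hs.trans_le ?_
    have := hfu n s t
    rw [Real.dist_eq] at this
    gcongr
  · intro c hc
    filter_upwards [h4.eventually (gt_mem_nhds hc)] with s hs
    refine lt_of_le_of_lt ?_ hs
    rw [intervalIntegral.integral_interval_sub_left (hmi 0 s) (hmi 0 t)]
    gcongr
    rcases le_total s t with hst | hst
    · rw [intervalIntegral.integral_symm, abs_neg]
      exact (hdm s t hst).trans (le_abs_self _)
    · rw [dist_comm]
      exact (hdm t s hst).trans (le_abs_self _)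

end WED

/-! ### The exponential measure and Hardy's inequality -/

namespace WED

theorem measurable_expDensity (ε : ℝ) :
    Measurable fun t : ℝ => ENNReal.ofReal (ε⁻¹ * Real.exp (-t / ε)) := by fun_prop

theorem lintegral_expMeasure (ε : ℝ) (f : ℝ → ℝ≥0∞) :
    ∫⁻ t, f t ∂expMeasure ε =
      ∫⁻ t in Ioi 0, ENNReal.ofReal (ε⁻¹ * Real.exp (-t / ε)) * f t := by
  rw [expMeasure, lintegral_withDensity_eq_lintegral_mul_non_measurable _
    (measurable_expDensity ε) (by simp)]
  rfl

theorem setLIntegral_expMeasure (ε : ℝ) (f : ℝ → ℝ≥0∞) {s : Set ℝ} (hs : MeasurableSet s) :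
    ∫⁻ t in s, f t ∂expMeasure ε =
      ∫⁻ t in s ∩ Ioi 0, ENNReal.ofReal (ε⁻¹ * Real.exp (-t / ε)) * f t := by
  rw [expMeasure, setLIntegral_withDensity_eq_setLIntegral_mul_non_measurable _
    (measurable_expDensity ε) _ hs (by simp), Measure.restrict_restrict hs]
  rfl

theorem expMeasure_absolutelyContinuous (ε : ℝ) :
    expMeasure ε ≪ volume.restrict (Ioi (0 : ℝ)) :=
  withDensity_absolutelyContinuous _ _

theorem ae_expMeasure_pos (ε : ℝ) : ∀ᵐ t ∂expMeasure ε, 0 < t :=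
  (expMeasure_absolutelyContinuous ε).ae_le (ae_restrict_mem measurableSet_Ioi)

theorem isFiniteMeasure_expMeasure {ε : ℝ} (hε : 0 < ε) : IsFiniteMeasure (expMeasure ε) := by
  refine isFiniteMeasure_withDensity_ofReal (Integrable.hasFiniteIntegral ?_)
  have h := (integrableOn_exp_mul_Ioi (a := -ε⁻¹) (by simpa using hε) 0).const_mul ε⁻¹
  refine h.congr (Eventually.of_forall fun t => ?_)
  simp only
  congr 2
  ring

/-- On bounded intervals Lebesgue measure is dominated by `μ_ε`, so that `L²(μ_ε)` functions are
locally square integrable. -/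
theorem restrict_Ioc_le {ε : ℝ} (hε : 0 < ε) (t : ℝ) :
    volume.restrict (Ioc 0 t) ≤ ENNReal.ofReal (ε * Real.exp (t / ε)) • expMeasure ε := by
  rw [Measure.le_iff]
  intro s hs
  rw [Measure.smul_apply, smul_eq_mul, ← setLIntegral_one (μ := expMeasure ε) s,
    setLIntegral_expMeasure ε _ hs, Measure.restrict_apply hs, ← lintegral_const_mul' _ _ ENNReal.ofReal_ne_top,
    ← setLIntegral_one]
  calc ∫⁻ x in s ∩ Ioc 0 t, 1
      ≤ ∫⁻ r in s ∩ Ioc 0 t, ENNReal.ofReal (ε * Real.exp (t / ε)) *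
          (ENNReal.ofReal (ε⁻¹ * Real.exp (-r / ε)) * 1) := by
        refine setLIntegral_mono' (hs.inter measurableSet_Ioc) fun r hr => ?_
        rw [mul_one, ← ENNReal.ofReal_mul (by positivity), ENNReal.one_le_ofReal]
        have : ε * Real.exp (t / ε) * (ε⁻¹ * Real.exp (-r / ε)) = Real.exp ((t - r) / ε) := by
          rw [show (t - r) / ε = t / ε + -r / ε by ring, Real.exp_add]
          field_simp
        rw [this, Real.one_le_exp_iff]
        exact div_nonneg (by linarith [hr.2.2]) hε.le
    _ ≤ _ := lintegral_mono_set (inter_subset_inter_right _ Ioc_subset_Ioi_self)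

/-- The memoryless property of the exponential measure. -/
theorem setLIntegral_Ici_expMeasure {ε T : ℝ} (hT : 0 < T) (f : ℝ → ℝ≥0∞) :
    ∫⁻ t in Ici T, f t ∂expMeasure ε =
      ENNReal.ofReal (Real.exp (-T / ε)) * ∫⁻ t, f (t + T) ∂expMeasure ε := by
  rw [setLIntegral_expMeasure ε f measurableSet_Ici, lintegral_expMeasure,
    ← lintegral_const_mul' _ _ (by simp),
    inter_eq_left.2 (show Ici T ⊆ Ioi 0 from fun t (ht : T ≤ t) => hT.trans_le ht),
    setLIntegral_congr Ioi_ae_eq_Ici.symm,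
    ← (measurePreserving_add_right volume T).setLIntegral_comp_preimage_emb
      (measurableEmbedding_addRight T)]
  have : (fun x : ℝ => x + T) ⁻¹' Ioi T = Ioi 0 := by ext; simp
  rw [this]
  refine lintegral_congr fun t => ?_
  rw [← mul_assoc, ← ENNReal.ofReal_mul (by positivity)]
  congr 2
  rw [show -(t + T) / ε = -T / ε + -t / ε by ring, Real.exp_add]
  ring

/-- The Cauchy–Schwarz inequality. -/
theorem sq_lintegral_mul_le {α : Type*} [MeasurableSpace α] (μ : Measure α) {f g : α → ℝ≥0∞}
    (hf : AEMeasurable f μ) (hg : AEMeasurable g μ) :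
    (∫⁻ a, f a * g a ∂μ) ^ 2 ≤ (∫⁻ a, f a ^ 2 ∂μ) * ∫⁻ a, g a ^ 2 ∂μ := by
  have h := ENNReal.lintegral_mul_le_Lp_mul_Lq μ Real.HolderConjugate.two_two hf hg
  simp only [Pi.mul_apply, ENNReal.rpow_two] at h
  calc _ ≤ ((∫⁻ a, f a ^ 2 ∂μ) ^ (1 / 2 : ℝ) * (∫⁻ a, g a ^ 2 ∂μ) ^ (1 / 2 : ℝ)) ^ 2 := by gcongr
    _ = _ := by
      rw [mul_pow, ← ENNReal.rpow_two, ← ENNReal.rpow_two, ← ENNReal.rpow_mul, ← ENNReal.rpow_mul]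
      norm_num

/-- Hardy's inequality for `μ_ε`, with constant `4ε²`: the Cauchy–Schwarz inequality with the weights
`e^{s/(4ε)}` and `e^{-s/(4ε)}` on the inner integral, followed by Tonelli's theorem. -/
theorem hardy_lintegral {ε : ℝ} (hε : 0 < ε) {k : ℝ → ℝ≥0∞}
    (hk : AEMeasurable k (volume.restrict (Ioi 0))) :
    ∫⁻ t, (∫⁻ s in Ioc 0 t, k s) ^ 2 ∂expMeasure ε ≤
      ENNReal.ofReal (4 * ε ^ 2) * ∫⁻ t, k t ^ 2 ∂expMeasure ε := by
  set c : ℝ → ℝ≥0∞ := fun s => k s ^ 2 * ENNReal.ofReal (Real.exp (-s / (2 * ε))) with hc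
  set a : ℝ → ℝ≥0∞ := fun t => ENNReal.ofReal (2 * Real.exp (-t / (2 * ε))) with ha
  have hcm : AEMeasurable c (volume.restrict (Ioi 0)) :=
    (hk.pow_const 2).mul (by fun_prop)
  have ham : Measurable a := by fun_prop
  have step1 : ∀ t, 0 < t → (∫⁻ s in Ioc 0 t, k s) ^ 2 ≤
      ENNReal.ofReal (2 * ε * Real.exp (t / (2 * ε))) * ∫⁻ s in Ioc 0 t, c s := by
    intro t ht
    have hk' : AEMeasurable k (volume.restrict (Ioc 0 t)) :=
      hk.mono_measure (Measure.restrict_mono Ioc_subset_Ioi_self le_rfl)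
    have h1 : ∫⁻ s in Ioc 0 t, k s = ∫⁻ s in Ioc 0 t,
        ENNReal.ofReal (Real.exp (s / (4 * ε))) *
          (k s * ENNReal.ofReal (Real.exp (-s / (4 * ε)))) := by
      refine lintegral_congr fun s => ?_
      rw [mul_left_comm, ← ENNReal.ofReal_mul (by positivity), ← Real.exp_add]
      rw [show s / (4 * ε) + -s / (4 * ε) = 0 by ring]
      simp
    rw [h1]
    refine (sq_lintegral_mul_le _ (by fun_prop) (hk'.mul (by fun_prop))).trans ?_
    refine mul_le_mul' ?_ (le_of_eq ?_)
    · have h2 : ∀ s : ℝ, ENNReal.ofReal (Real.exp (s / (4 * ε))) ^ 2 =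
          ENNReal.ofReal (Real.exp ((2 * ε)⁻¹ * s)) := by
        intro s
        rw [← ENNReal.ofReal_pow (by positivity), ← Real.exp_nat_mul]
        congr 2
        push_cast
        field_simp
        ring
      simp only [h2]
      refine (lintegral_mono_set Ioc_subset_Iic_self).trans ?_
      rw [← ofReal_integral_eq_lintegral_ofReal (integrableOn_exp_mul_Iic (by positivity) t)
        (Eventually.of_forall fun _ => (Real.exp_pos _).le), integral_exp_mul_Iic (by positivity)]
      apply ENNReal.ofReal_le_ofReal
      apply le_of_eq
      rw [show (2 * ε)⁻¹ * t = t / (2 * ε) by ring]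
      field_simp
    · refine lintegral_congr fun s => ?_
      rw [Pi.mul_apply, mul_pow, ← ENNReal.ofReal_pow (by positivity), ← Real.exp_nat_mul]
      simp only [hc]
      congr 3
      push_cast
      field_simp
      ring
  rw [lintegral_expMeasure, lintegral_expMeasure]
  calc ∫⁻ t in Ioi 0, ENNReal.ofReal (ε⁻¹ * Real.exp (-t / ε)) * (∫⁻ s in Ioc 0 t, k s) ^ 2
      ≤ ∫⁻ t in Ioi 0, ∫⁻ s in Ioi 0, {p : ℝ × ℝ | p.2 ≤ p.1}.indicator
          (fun p => a p.1 * c p.2) (t, s) := by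
        refine setLIntegral_mono' measurableSet_Ioi fun t ht => ?_
        calc _ ≤ ENNReal.ofReal (ε⁻¹ * Real.exp (-t / ε)) *
              (ENNReal.ofReal (2 * ε * Real.exp (t / (2 * ε))) * ∫⁻ s in Ioc 0 t, c s) := by
              gcongr
              exact step1 t ht
          _ = a t * ∫⁻ s in Ioc 0 t, c s := by
              rw [← mul_assoc, ← ENNReal.ofReal_mul (by positivity)]
              congr 2
              rw [show -t / (2 * ε) = -t / ε + t / (2 * ε) by field_simp; ring, Real.exp_add]
              field_simp
          _ = ∫⁻ s in Ioc 0 t, a t * c s := by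
              rw [lintegral_const_mul' _ _ (by simp only [ha]; exact ENNReal.ofReal_ne_top)]
          _ = ∫⁻ s in Ioi 0, (Iic t).indicator (fun s => a t * c s) s := by
              rw [lintegral_indicator measurableSet_Iic, Measure.restrict_restrict measurableSet_Iic,
                inter_comm, Ioi_inter_Iic]
          _ = _ := lintegral_congr fun s => by simp [indicator]
          _ ≤ _ := le_rfl
    _ = ∫⁻ s in Ioi 0, ∫⁻ t in Ioi 0, {p : ℝ × ℝ | p.2 ≤ p.1}.indicator
          (fun p => a p.1 * c p.2) (t, s) := by
        refine lintegral_lintegral_swap ?_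
        refine AEMeasurable.indicator ?_ (measurableSet_le measurable_snd measurable_fst)
        exact (ham.comp measurable_fst).aemeasurable.mul hcm.comp_snd
    _ ≤ ∫⁻ s in Ioi 0, ENNReal.ofReal (4 * ε ^ 2) *
          (ENNReal.ofReal (ε⁻¹ * Real.exp (-s / ε)) * k s ^ 2) := by
        refine setLIntegral_mono' measurableSet_Ioi fun s hs => ?_
        calc _ ≤ ∫⁻ t in Ioi 0, (Ici s).indicator (fun t => a t * c s) t := by
              apply le_of_eq
              exact lintegral_congr fun s => by simp [indicator]
          _ ≤ ∫⁻ t in Ioi s, a t * c s := by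
              rw [lintegral_indicator measurableSet_Ici, setLIntegral_congr (Ioi_ae_eq_Ici (a := s))]
              rw [Measure.restrict_restrict measurableSet_Ici]
              exact lintegral_mono_set inter_subset_left
          _ = (∫⁻ t in Ioi s, a t) * c s := lintegral_mul_const _ ham
          _ = ENNReal.ofReal (4 * ε * Real.exp (-s / (2 * ε))) * c s := by
              congr 1
              have h3 := integrableOn_exp_mul_Ioi (a := -(2 * ε)⁻¹)
                (neg_lt_zero.2 (by positivity)) s
              have h4 := integral_exp_mul_Ioi (a := -(2 * ε)⁻¹)
                (neg_lt_zero.2 (by positivity)) s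
              have h5 : ∀ t, a t = ENNReal.ofReal (2 * Real.exp (-(2 * ε)⁻¹ * t)) := by
                intro t
                simp only [ha]
                congr 3
                ring
              simp only [h5]
              rw [← ofReal_integral_eq_lintegral_ofReal (h3.const_mul 2)
                (Eventually.of_forall fun _ => by positivity), integral_const_mul, h4]
              congr 1
              rw [show -(2 * ε)⁻¹ * s = -s / (2 * ε) by ring]
              field_simp
              norm_num
          _ = _ := by
              simp only [hc]
              rw [mul_comm (k s ^ 2), ← mul_assoc, ← mul_assoc, ← ENNReal.ofReal_mul (by positivity),
                ← ENNReal.ofReal_mul (by positivity)]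
              congr 2
              rw [show -s / ε = -s / (2 * ε) + -s / (2 * ε) by field_simp; norm_num, Real.exp_add]
              field_simp
    _ = _ := lintegral_const_mul' _ _ ENNReal.ofReal_ne_top

end WED

/-! ### Extended-real integrals and the sequential form of the assumptions -/

namespace WED

theorem epos_eq_toENNReal (x : EReal) : epos x = x.toENNReal := rfl

/-- The identity `f⁺ - f⁻ = F + s⁺ - s⁻` for `f = F + s`, written without subtraction so that it
holds in `ℝ≥0∞`. -/
theorem epos_add_identity (F : ℝ≥0∞) (s : ℝ) :
    epos ((F : EReal) + (s : EReal)) + ENNReal.ofReal (-s) =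
      F + ENNReal.ofReal s + epos (-((F : EReal) + (s : EReal))) := by
  simp only [epos_eq_toENNReal]
  induction F with
  | top => simp
  | coe r =>
    have h1 : ((r : ℝ≥0∞) : EReal) + (s : EReal) = (((r : ℝ) + s : ℝ) : EReal) := by
      rw [EReal.coe_add]; rfl
    rw [h1, ← EReal.coe_neg, EReal.toENNReal_of_ne_top (EReal.coe_ne_top _),
      EReal.toENNReal_of_ne_top (EReal.coe_ne_top _), EReal.toReal_coe, EReal.toReal_coe,
      ← ENNReal.ofReal_coe_nnreal]
    have hr : (0 : ℝ) ≤ (r : ℝ) := r.2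
    generalize (r : ℝ) = a at hr ⊢
    rcases le_total 0 s with hs | hs <;> rcases le_total 0 (a + s) with hs' | hs'
    · rw [ENNReal.ofReal_of_nonpos (p := -s) (by linarith),
        ENNReal.ofReal_of_nonpos (p := -(a+s)) (by linarith), ENNReal.ofReal_add hr hs]
    · have : a = 0 := by linarith
      have : s = 0 := by linarith
      simp [*]
    · rw [ENNReal.ofReal_of_nonpos (p := s) hs,
        ENNReal.ofReal_of_nonpos (p := -(a+s)) (by linarith), ← ENNReal.ofReal_add (by linarith)
        (by linarith)]
      simp
    · rw [ENNReal.ofReal_of_nonpos (p := s) hs,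
        ENNReal.ofReal_of_nonpos (p := (a+s)) (by linarith), add_zero, zero_add,
        ← ENNReal.ofReal_add (by linarith) (by linarith)]
      congr 1; ring

theorem epos_neg_add_le (F : ℝ≥0∞) (s : ℝ) :
    epos (-((F : EReal) + (s : EReal))) ≤ ENNReal.ofReal (-s) := by
  have : ENNReal.ofReal (-s) = epos ((-s : ℝ) : EReal) := by
    simp [epos_eq_toENNReal]
  rw [this, epos_eq_toENNReal, epos_eq_toENNReal]
  apply EReal.toENNReal_le_toENNReal
  rw [EReal.coe_neg, EReal.neg_le_neg_iff]
  exact le_add_of_nonneg_left (EReal.coe_ennreal_nonneg F)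

theorem eIntegral_congr {ν : Measure ℝ} {f g : ℝ → EReal} (h : f =ᵐ[ν] g) :
    eIntegral ν f = eIntegral ν g := by
  unfold eIntegral
  congr 2
  · exact lintegral_congr_ae (h.fun_comp epos)
  · exact lintegral_congr_ae (h.fun_comp fun x => epos (-x))

/-- For a nonnegative function plus an integrable one, the positive-minus-negative-part integral is
additive: the negative part is integrable, so `∞ - ∞` does not occur. -/
theorem eIntegral_add_real {ν : Measure ℝ} {F : ℝ → ℝ≥0∞} {s : ℝ → ℝ}
    (hF : AEMeasurable F ν) (hs : Integrable s ν) :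
    eIntegral ν (fun t => (F t : EReal) + (s t : EReal)) =
      ((∫⁻ t, F t ∂ν : ℝ≥0∞) : EReal) + ((∫ t, s t ∂ν : ℝ) : EReal) ∧
    ∫⁻ t, epos (-((F t : EReal) + (s t : EReal))) ∂ν ≠ ⊤ := by
  have hsm : AEMeasurable s ν := hs.1.aemeasurable
  have ha : ∫⁻ t, ENNReal.ofReal (-s t) ∂ν ≠ ⊤ := hs.neg.lintegral_lt_top.ne
  have hb : ∫⁻ t, ENNReal.ofReal (s t) ∂ν ≠ ⊤ := hs.lintegral_lt_top.ne
  have hN : ∫⁻ t, epos (-((F t : EReal) + (s t : EReal))) ∂ν ≠ ⊤ :=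
    ne_top_of_le_ne_top ha (lintegral_mono fun t => epos_neg_add_le _ _)
  refine ⟨?_, hN⟩
  have key := lintegral_congr (μ := ν) fun t => epos_add_identity (F t) (s t)
  rw [lintegral_add_right' _ (by fun_prop), lintegral_add_left' (by fun_prop),
    lintegral_add_left' hF] at key
  rw [integral_eq_lintegral_pos_part_sub_lintegral_neg_part hs, eIntegral]
  generalize ∫⁻ t, epos (-((F t : EReal) + (s t : EReal))) ∂ν = N at *
  generalize ∫⁻ t, epos ((F t : EReal) + (s t : EReal)) ∂ν = P at *
  generalize ∫⁻ t, ENNReal.ofReal (-s t) ∂ν = a at *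
  generalize ∫⁻ t, ENNReal.ofReal (s t) ∂ν = b at *
  generalize ∫⁻ t, F t ∂ν = E at *
  lift N to NNReal using hN
  lift a to NNReal using ha
  lift b to NNReal using hb
  induction E with
  | top =>
    have : P = ⊤ := by
      by_contra h
      lift P to NNReal using h
      simp [← ENNReal.coe_add] at key
    rw [this]
    simp only [EReal.coe_ennreal_top, EReal.top_add_coe]
    exact EReal.top_sub_coe _
  | coe E =>
    have hP : P ≠ ⊤ := by
      rintro rfl
      simp [← ENNReal.coe_add] at key
    lift P to NNReal using hP
    have k2 : (P : ℝ) + a = E + b + N := by exact_mod_cast key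
    have : ∀ r : NNReal, (((r : ℝ≥0∞)) : EReal) = ((r : ℝ) : EReal) := fun _ => rfl
    rw [this, this, this, ← EReal.coe_sub, ← EReal.coe_add, EReal.coe_eq_coe_iff]
    simp only [ENNReal.coe_toReal]
    linarith

/-- Additivity over a set and its complement, under integrability of the negative part. -/
theorem eIntegral_split {ν : Measure ℝ} {f : ℝ → EReal} {S : Set ℝ} (hS : MeasurableSet S)
    (hN : ∫⁻ t, epos (-f t) ∂ν ≠ ⊤) :
    eIntegral ν f = eIntegral (ν.restrict S) f + eIntegral (ν.restrict Sᶜ) f := by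
  unfold eIntegral
  rw [← lintegral_add_compl (fun t => epos (-f t)) hS] at hN ⊢
  rw [← lintegral_add_compl (fun t => epos (f t)) hS]
  obtain ⟨h1, h2⟩ := ENNReal.add_ne_top.1 hN
  generalize ∫⁻ t in S, epos (-f t) ∂ν = N1 at *
  generalize ∫⁻ t in Sᶜ, epos (-f t) ∂ν = N2 at *
  generalize ∫⁻ t in S, epos (f t) ∂ν = P1 at *
  generalize ∫⁻ t in Sᶜ, epos (f t) ∂ν = P2 at *
  lift N1 to NNReal using h1
  lift N2 to NNReal using h2
  have hc : ∀ r : NNReal, (((r : ℝ≥0∞)) : EReal) = ((r : ℝ) : EReal) := fun _ => rfl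
  rw [← ENNReal.coe_add, hc, hc, hc]
  have hb : ∀ (P : ℝ≥0∞) (r : ℝ), (P : EReal) - (r : EReal) ≠ ⊥ := by
    intro P r
    induction P with
    | top => rw [EReal.coe_ennreal_top, EReal.top_sub_coe]; simp
    | coe P => rw [hc, ← EReal.coe_sub]; exact EReal.coe_ne_bot _
  induction P1 with
  | top =>
    rw [top_add, EReal.coe_ennreal_top, EReal.top_sub_coe, EReal.top_sub_coe,
      EReal.top_add_of_ne_bot (hb _ _)]
  | coe P1 =>
    induction P2 with
    | top =>
      rw [add_top, EReal.coe_ennreal_top, EReal.top_sub_coe, EReal.top_sub_coe,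
        EReal.add_top_of_ne_bot (hb _ _)]
    | coe P2 =>
      rw [← ENNReal.coe_add, hc, hc, hc]
      norm_cast
      push_cast
      ring

/-- The sequential content of the metric-topological setting and of the assumptions on `φ`, for an
abstract notion of convergence of sequences `conv` (in the application: convergence in the auxiliary
topology). Only the metric topology of `X` is visible in this formulation. -/
structure SeqSetting {X : Type*} [MetricSpace X] (φ : X → EReal) (ustar : X) (A B : ℝ)
    (conv : (ℕ → X) → X → Prop) : Prop where
  hB : 0 ≤ B
  ne_bot : ∀ x, φ x ≠ ⊥
  coercive : ∀ u v : X, ((-(B * dist u v ^ 2 + (B * dist v ustar ^ 2 + A)) : ℝ) : EReal) ≤ φ u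
  comp : ∀ u x (j : ℕ → ℕ), conv u x → StrictMono j → conv (u ∘ j) x
  tail : ∀ u x (N : ℕ), conv (fun n => u (n + N)) x → conv u x
  of_tendsto : ∀ u x, Tendsto u atTop (𝓝 x) → conv u x
  dist_le : ∀ (u v : ℕ → X) (x y : X) (b : ℕ → ℝ) (c : ℝ), conv u x → conv v y →
    Tendsto b atTop (𝓝 c) → (∀ n, dist (u n) (v n) ≤ b n) → dist x y ≤ c
  diag : ∀ (u : ℕ → X) (x : X) (w : ℕ → ℕ → X) (y : ℕ → X) (δ : ℕ → ℝ),
    (∀ k, conv (w k) (y k)) → Tendsto y atTop (𝓝 x) → Tendsto δ atTop (𝓝 0) →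
    (∀ k n, dist (u n) (w k n) ≤ δ k) → conv u x
  lsc : ∀ (u : ℕ → X) (x : X), (∃ C : ℝ, ∀ n k, dist (u n) (u k) ≤ C) →
    conv u x → φ x ≤ Filter.liminf (fun n => φ (u n)) atTop
  cpt : ∀ u : ℕ → X, (∃ C : ℝ, ∀ n, φ (u n) ≤ (C : EReal)) →
    (∃ C : ℝ, ∀ n k, dist (u n) (u k) ≤ C) →
    ∃ (x : X) (j : ℕ → ℕ), StrictMono j ∧ conv (u ∘ j) x

/-- By (MT2), `d`-convergence implies convergence in the auxiliary topology. -/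
theorem Compatible.conv_of_dist {X : Type*} [MetricSpace X] {σ : TopologicalSpace X}
    (hcomp : Compatible σ) {u : ℕ → X} {x : X} (h : Tendsto (fun n => dist (u n) x) atTop (𝓝 0)) :
    Tendsto u atTop (@nhds X σ x) := by
  rw [tendsto_nhds]
  intro U hU hxU
  obtain ⟨V, -, hxV, δ, hδ, hV⟩ := hcomp.mt2 U hU x hxU
  filter_upwards [h.eventually_lt_const hδ] with n hn
  exact hV _ ((Metric.infDist_le_dist_of_mem hxV).trans_lt hn)

theorem LSCC.seqSetting {X : Type*} [MetricSpace X] {σ : TopologicalSpace X}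
    (hcomp : Compatible σ) {φ : X → EReal} {ustar : X} {A B : ℝ} (hφ : LSCC σ φ ustar A B) :
    SeqSetting φ ustar A B (fun u x => Tendsto u atTop (@nhds X σ x)) where
  hB := hφ.hB
  ne_bot := hφ.ne_bot
  coercive := hφ.coercive
  comp u x j h hj := h.comp hj.tendsto_atTop
  tail u x N h := (tendsto_add_atTop_iff_nat N).1 h
  of_tendsto u x h := hcomp.conv_of_dist (tendsto_iff_dist_tendsto_zero.1 h)
  dist_le u v x y b c hu hv hb h := by
    have h1 := hcomp.mt1 u v x y hu hv
    have hc : 0 ≤ c := ge_of_tendsto' hb fun n => dist_nonneg.trans (h n)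
    have h2 : liminf (fun n => ENNReal.ofReal (dist (u n) (v n))) atTop ≤ ENNReal.ofReal c := by
      rw [← (ENNReal.tendsto_ofReal hb).liminf_eq]
      exact liminf_le_liminf (Eventually.of_forall fun n => ENNReal.ofReal_le_ofReal (h n))
    exact (ENNReal.ofReal_le_ofReal_iff hc).1 (h1.trans h2)
  diag u x w y δ hw hy hδ hd := by
    rw [tendsto_nhds]
    intro U hU hxU
    obtain ⟨V, hVo, hxV, η, hη, hV⟩ := hcomp.mt2 U hU x hxU
    have hy' := hcomp.conv_of_dist (tendsto_iff_dist_tendsto_zero.1 hy)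
    obtain ⟨k, hk1, hk2⟩ := (Filter.Eventually.and (f := atTop) (p := fun k => y k ∈ V)
      (tendsto_nhds.1 hy' V hVo hxV) (hδ.eventually_lt_const hη)).exists
    filter_upwards [tendsto_nhds.1 (hw k) V hVo hk1] with n hn
    have hn' : w k n ∈ V := hn
    exact hV _ ((Metric.infDist_le_dist_of_mem hn').trans_lt ((hd k n).trans_lt hk2))
  lsc := hφ.lsc
  cpt := hφ.cpt

/-- `φ` is lower semicontinuous for the metric topology; this makes `φ ∘ u` measurable along
continuous curves. -/
theorem SeqSetting.lowerSemicontinuous {X : Type*} [MetricSpace X] {φ : X → EReal} {ustar : X}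
    {A B : ℝ} {conv : (ℕ → X) → X → Prop} (S : SeqSetting φ ustar A B conv) :
    LowerSemicontinuous φ := by
  intro x y hy
  by_contra hcon
  obtain ⟨u, hu, hle⟩ := Filter.exists_seq_forall_of_frequently (not_eventually.1 hcon)
  have h1 := S.lsc u x ?_ (S.of_tendsto u x hu)
  · refine absurd (hy.trans_le h1) (not_lt.2 ?_)
    calc liminf (fun n => φ (u n)) atTop ≤ liminf (fun _ : ℕ => y) atTop :=
          liminf_le_liminf (Eventually.of_forall fun n => not_lt.1 (hle n))
      _ = y := by simp
  · obtain ⟨C, hC⟩ := cauchySeq_bdd hu.cauchySeq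
    exact ⟨C, fun n k => (hC.2 n k).le⟩

end WED

/-! ### Splitting of the energy -/

namespace WED

theorem restrict_absolutelyContinuous_expMeasure {ε : ℝ} (hε : 0 < ε) :
    volume.restrict (Ioi (0 : ℝ)) ≪ expMeasure ε := by
  refine withDensity_absolutelyContinuous' (measurable_expDensity ε).aemeasurable ?_
  refine Eventually.of_forall fun t => ?_
  simp only [ne_eq, ENNReal.ofReal_eq_zero, not_le]
  positivity

theorem integrableOn_Ioc_of_memLp {ε : ℝ} (hε : 0 < ε) {h : ℝ → ℝ}
    (hh : MemLp h 2 (expMeasure ε)) (t : ℝ) :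
    MemLp h 2 (volume.restrict (Ioc 0 t)) ∧ IntegrableOn h (Ioc 0 t) volume := by
  have h1 : MemLp h 2 (volume.restrict (Ioc 0 t)) :=
    hh.of_measure_le_smul ENNReal.ofReal_ne_top (restrict_Ioc_le hε t)
  exact ⟨h1, h1.integrable (by norm_num)⟩

theorem intervalIntegrable_of_memLp {ε : ℝ} (hε : 0 < ε) {h : ℝ → ℝ}
    (hh : MemLp h 2 (expMeasure ε)) {s t : ℝ} (hs : 0 ≤ s) (ht : 0 ≤ t) :
    IntervalIntegrable h volume s t := by
  have h0 : ∀ r, 0 ≤ r → IntervalIntegrable h volume 0 r := fun r hr =>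
    (intervalIntegrable_iff_integrableOn_Ioc_of_le hr).2 (integrableOn_Ioc_of_memLp hε hh r).2
  exact (h0 s hs).symm.trans (h0 t ht)

theorem intervalIntegrable_indicator {ε : ℝ} (hε : 0 < ε) {h : ℝ → ℝ}
    (hh : MemLp h 2 (expMeasure ε)) (a b : ℝ) :
    IntervalIntegrable ((Ioi 0).indicator h) volume a b := by
  have key : ∀ a b : ℝ, IntegrableOn ((Ioi 0).indicator h) (Ioc a b) := by
    intro a b
    rw [IntegrableOn, integrable_indicator_iff measurableSet_Ioi, IntegrableOn,
      Measure.restrict_restrict measurableSet_Ioi]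
    exact (integrableOn_Ioc_of_memLp hε hh b).2.mono_set fun t ht => ⟨ht.1, ht.2.2⟩
  exact ⟨key a b, key b a⟩

theorem locallyIntegrable_indicator {ε : ℝ} (hε : 0 < ε) {h : ℝ → ℝ}
    (hh : MemLp h 2 (expMeasure ε)) : LocallyIntegrable ((Ioi 0).indicator h) volume := by
  intro x
  refine ⟨Ioc (x - 1) (x + 1), Ioc_mem_nhds (by linarith) (by linarith),
    (intervalIntegrable_indicator hε hh _ _).1⟩

theorem intervalIntegral_indicator {h : ℝ → ℝ} {s t : ℝ} (hs : 0 ≤ s) (ht : 0 ≤ t) :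
    ∫ r in s..t, (Ioi 0).indicator h r = ∫ r in s..t, h r := by
  refine intervalIntegral.integral_congr_ae (Eventually.of_forall fun r hr => ?_)
  refine indicator_of_mem ?_ _
  exact (le_min hs ht).trans_lt hr.1

theorem continuous_primitive_indicator {ε : ℝ} (hε : 0 < ε) {h : ℝ → ℝ}
    (hh : MemLp h 2 (expMeasure ε)) : Continuous fun t => ∫ s in (0 : ℝ)..t, (Ioi 0).indicator h s :=
  intervalIntegral.continuous_primitive (intervalIntegrable_indicator hε hh) 0

/-- Hardy's inequality for signed functions: `f ↦ ∫₀^· f` is bounded on `L²(μ_ε)`, with norm at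
most `2ε`. -/
theorem hardy_real {ε : ℝ} (hε : 0 < ε) {h : ℝ → ℝ} (hh : MemLp h 2 (expMeasure ε)) :
    MemLp (fun t => ∫ s in (0 : ℝ)..t, h s) 2 (expMeasure ε) ∧
      ∫ t, (∫ s in (0 : ℝ)..t, h s) ^ 2 ∂expMeasure ε ≤ 4 * ε ^ 2 * ∫ t, h t ^ 2 ∂expMeasure ε := by
  have hmeas : AEStronglyMeasurable (fun t => ∫ s in (0 : ℝ)..t, h s) (expMeasure ε) := by
    refine (continuous_primitive_indicator hε hh).aestronglyMeasurable.congr ?_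
    filter_upwards [ae_expMeasure_pos ε] with t ht
    exact intervalIntegral_indicator le_rfl ht.le
  have hk : AEMeasurable (fun t => ‖h t‖ₑ) (volume.restrict (Ioi 0)) :=
    (hh.1.mono_ac (restrict_absolutelyContinuous_expMeasure hε)).enorm
  have hsq : ∀ f : ℝ → ℝ, ∀ t, ENNReal.ofReal (f t ^ 2) = ‖f t‖ₑ ^ 2 := by
    intro f t
    rw [← sq_abs, ENNReal.ofReal_pow (abs_nonneg _), ← Real.enorm_eq_ofReal_abs]
  have hle : ∫⁻ t, ENNReal.ofReal ((∫ s in (0 : ℝ)..t, h s) ^ 2) ∂expMeasure ε ≤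
      ENNReal.ofReal (4 * ε ^ 2) * ∫⁻ t, ENNReal.ofReal (h t ^ 2) ∂expMeasure ε := by
    refine le_trans (lintegral_mono_ae ?_) ((hardy_lintegral hε hk).trans_eq ?_)
    · filter_upwards [ae_expMeasure_pos ε] with t ht
      rw [hsq (fun t => ∫ s in (0 : ℝ)..t, h s), intervalIntegral.integral_of_le ht.le]
      gcongr
      exact enorm_integral_le_lintegral_enorm _
    · simp only [hsq]
  have hi := hh.integrable_sq
  have hfin : ∫⁻ t, ENNReal.ofReal (h t ^ 2) ∂expMeasure ε ≠ ⊤ := hi.lintegral_lt_top.ne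
  have hi2 : Integrable (fun t => (∫ s in (0 : ℝ)..t, h s) ^ 2) (expMeasure ε) := by
    refine ⟨hmeas.pow 2, ?_⟩
    rw [hasFiniteIntegral_iff_ofReal (Eventually.of_forall fun t => sq_nonneg _)]
    exact hle.trans_lt (ENNReal.mul_lt_top ENNReal.ofReal_lt_top hfin.lt_top)
  refine ⟨(memLp_two_iff_integrable_sq hmeas).2 hi2, ?_⟩
  rw [← ofReal_integral_eq_lintegral_ofReal hi2 (Eventually.of_forall fun t => sq_nonneg _),
    ← ofReal_integral_eq_lintegral_ofReal hi (Eventually.of_forall fun t => sq_nonneg _),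
    ← ENNReal.ofReal_mul (by positivity)] at hle
  exact (ENNReal.ofReal_le_ofReal_iff (by
    have := integral_nonneg (μ := expMeasure ε) (f := fun t => h t ^ 2) fun t => sq_nonneg _
    positivity)).1 hle

/-- A curve `u` starting at `x` together with an `L²(μ_ε)` function `g` that controls the distance
travelled from `x`. In contrast to the metric derivative, `g` need not be a derivative of `u`;
this class is stable under the weak limits used in the existence proof. -/
structure Controlled {X : Type*} [MetricSpace X] (ε : ℝ) (x : X) (u : ℝ → X) (g : ℝ → ℝ) : Prop where
  cont : ContinuousOn u (Ici 0)
  memLp : MemLp g 2 (expMeasure ε)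
  dist_le : ∀ t, 0 ≤ t → dist (u t) x ≤ ∫ s in (0 : ℝ)..t, g s

/-- The nonnegative shifted potential `φ(u) + B R_g² + Q(x)`, where `R_g(t) = ∫₀ᵗ g`. -/
def shifted {X : Type*} [MetricSpace X] (φ : X → EReal) (ustar : X) (A B : ℝ) (x : X) (u : ℝ → X)
    (g : ℝ → ℝ) (t : ℝ) : ℝ≥0∞ :=
  epos (φ (u t) + ((B * (∫ s in (0 : ℝ)..t, g s) ^ 2 + (B * dist x ustar ^ 2 + A) : ℝ) : EReal))

/-- The quadratic part `(ε/2) g² - B R_g² - Q(x)` of the integrand. -/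
def quadPart {X : Type*} [MetricSpace X] (ε : ℝ) (ustar : X) (A B : ℝ) (x : X)
    (g : ℝ → ℝ) (t : ℝ) : ℝ :=
  ε / 2 * g t ^ 2 - B * (∫ s in (0 : ℝ)..t, g s) ^ 2 - (B * dist x ustar ^ 2 + A)

section
variable {X : Type*} [MetricSpace X] {φ : X → EReal} {ustar : X}
    {A B : ℝ} {conv : (ℕ → X) → X → Prop} {ε : ℝ} {x : X} {u : ℝ → X} {g : ℝ → ℝ}

theorem SeqSetting.measurable_comp (S : SeqSetting φ ustar A B conv)
    (hu : ContinuousOn u (Ici 0)) : AEMeasurable (fun t => φ (u t)) (expMeasure ε) := by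
  have hc : Continuous fun t => u (max t 0) :=
    hu.comp_continuous (by fun_prop) fun t => mem_Ici.2 (le_max_right _ _)
  have h2 : LowerSemicontinuous fun t => φ (u (max t 0)) := S.lowerSemicontinuous.comp hc
  refine h2.measurable.aemeasurable.congr ?_
  filter_upwards [ae_expMeasure_pos ε] with t ht
  rw [max_eq_left ht.le]

/-- Coercivity, read at a point `y` at distance at most `r` from the starting point `x`. -/
theorem SeqSetting.shifted_nonneg (S : SeqSetting φ ustar A B conv) {y : X} {r : ℝ}
    (h : dist y x ≤ r) :
    0 ≤ φ y + ((B * r ^ 2 + (B * dist x ustar ^ 2 + A) : ℝ) : EReal) := by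
  have h1 := S.coercive y x
  have h2 : ((-(B * r ^ 2 + (B * dist x ustar ^ 2 + A)) : ℝ) : EReal) ≤ φ y := by
    refine le_trans (EReal.coe_le_coe ?_) h1
    have := S.hB
    gcongr
  calc (0 : EReal) = ((-(B * r ^ 2 + (B * dist x ustar ^ 2 + A)) : ℝ) : EReal) +
        ((B * r ^ 2 + (B * dist x ustar ^ 2 + A) : ℝ) : EReal) := by
        rw [← EReal.coe_add, neg_add_cancel, EReal.coe_zero]
    _ ≤ _ := by gcongr

theorem SeqSetting.coe_shifted (S : SeqSetting φ ustar A B conv) (h : Controlled ε x u g) {t : ℝ}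
    (ht : 0 ≤ t) : (shifted φ ustar A B x u g t : EReal) =
      φ (u t) + ((B * (∫ s in (0 : ℝ)..t, g s) ^ 2 + (B * dist x ustar ^ 2 + A) : ℝ) : EReal) :=
  EReal.coe_toENNReal (S.shifted_nonneg (h.dist_le t ht))

theorem SeqSetting.wedIntegrand_eq (S : SeqSetting φ ustar A B conv) (h : Controlled ε x u g) {t : ℝ}
    (ht : 0 ≤ t) : wedIntegrand φ ε u g t =
      (shifted φ ustar A B x u g t : EReal) + (quadPart ε ustar A B x g t : EReal) := by
  rw [S.coe_shifted h ht, wedIntegrand, add_assoc, ← EReal.coe_add, add_comm, quadPart]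
  congr 2
  ring

theorem SeqSetting.aemeasurable_shifted (S : SeqSetting φ ustar A B conv) (hε : 0 < ε)
    (h : Controlled ε x u g) :
    AEMeasurable (shifted φ ustar A B x u g) (expMeasure ε) := by
  have h1 := (hardy_real hε h.memLp).1.1.aemeasurable
  have h2 := S.measurable_comp (ε := ε) h.cont
  refine measurable_ereal_toENNReal.comp_aemeasurable ?_
  refine h2.add (measurable_coe_real_ereal.comp_aemeasurable ?_)
  fun_prop

theorem integrable_quadPart (hε : 0 < ε) (hg : MemLp g 2 (expMeasure ε)) :
    Integrable (quadPart ε ustar A B x g) (expMeasure ε) := by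
  have := isFiniteMeasure_expMeasure hε
  exact ((hg.integrable_sq.const_mul _).sub ((hardy_real hε hg).1.integrable_sq.const_mul _)).sub
    (integrable_const _)

/-- The WED functional is the integral of the nonnegative shifted potential plus that of the
integrable quadratic part, and the integrand has integrable negative part. -/
theorem SeqSetting.eIntegral_eq (S : SeqSetting φ ustar A B conv) (hε : 0 < ε)
    (h : Controlled ε x u g) :
    WEDfun φ ε u g = ((∫⁻ t, shifted φ ustar A B x u g t ∂expMeasure ε : ℝ≥0∞) : EReal) +
        ((∫ t, quadPart ε ustar A B x g t ∂expMeasure ε : ℝ) : EReal) ∧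
      ∫⁻ t, epos (-wedIntegrand φ ε u g t) ∂expMeasure ε ≠ ⊤ := by
  have h1 := eIntegral_add_real (S.aemeasurable_shifted hε h)
    (integrable_quadPart (x := x) (ustar := ustar) (A := A) (B := B) hε h.memLp)
  have h2 : wedIntegrand φ ε u g =ᵐ[expMeasure ε] fun t =>
      (shifted φ ustar A B x u g t : EReal) + (quadPart ε ustar A B x g t : EReal) := by
    filter_upwards [ae_expMeasure_pos ε] with t ht using S.wedIntegrand_eq h ht.le
  refine ⟨(eIntegral_congr h2).trans h1.1, ?_⟩
  have h3 := lintegral_congr_ae (h2.fun_comp fun x => epos (-x))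
  exact h3 ▸ h1.2

/-- The quadratic part is coercive in `L²(μ_ε)`: by Hardy's inequality the term `B R_g²` costs at most
`4ε²B ≤ ε/4` times `∫ g²`. -/
theorem quadPart_ge (hε : 0 < ε) (hεB : B ≤ 1 / (16 * ε)) (hB : 0 ≤ B)
    (hg : MemLp g 2 (expMeasure ε)) :
    ε / 4 * ∫ t, g t ^ 2 ∂expMeasure ε - (B * dist x ustar ^ 2 + A) * (expMeasure ε).real univ ≤
      ∫ t, quadPart ε ustar A B x g t ∂expMeasure ε := by
  have := isFiniteMeasure_expMeasure hε
  unfold quadPart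
  rw [integral_sub, integral_sub, integral_const_mul, integral_const_mul, integral_const,
    smul_eq_mul]
  · have h1 := (hardy_real hε hg).2
    have h2 : 0 ≤ ∫ t, g t ^ 2 ∂expMeasure ε := integral_nonneg fun t => sq_nonneg _
    have h3 : B * (4 * ε ^ 2) ≤ ε / 4 := by
      calc B * (4 * ε ^ 2) ≤ 1 / (16 * ε) * (4 * ε ^ 2) := by gcongr
        _ = ε / 4 := by field_simp; norm_num
    have h4 := mul_le_mul_of_nonneg_left h1 hB
    have h5 := mul_le_mul_of_nonneg_right h3 h2
    linarith
  · exact hg.integrable_sq.const_mul _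
  · exact (hardy_real hε hg).1.integrable_sq.const_mul _
  · exact (hg.integrable_sq.const_mul _).sub ((hardy_real hε hg).1.integrable_sq.const_mul _)
  · exact integrable_const _

end

end WED

/-! ### Admissible curves -/

namespace WED

theorem integrableOn_Icc_of_memLp {ε : ℝ} (hε : 0 < ε) {h : ℝ → ℝ}
    (hh : MemLp h 2 (expMeasure ε)) {s : ℝ} (hs : 0 ≤ s) (t : ℝ) :
    IntegrableOn h (Icc s t) volume ∧ IntegrableOn (fun r => h r ^ 2) (Icc s t) volume := by
  obtain ⟨h1, h2⟩ := integrableOn_Ioc_of_memLp hε hh t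
  have hsub : Ioc s t ⊆ Ioc 0 t := Ioc_subset_Ioc_left hs
  rw [integrableOn_Icc_iff_integrableOn_Ioc, integrableOn_Icc_iff_integrableOn_Ioc]
  refine ⟨h2.mono_set hsub, IntegrableOn.mono_set ?_ hsub⟩
  exact h1.integrable_sq

theorem nhdsWithin_Ici_diff {t : ℝ} (ht : 0 < t) : 𝓝[Ici 0 \ {t}] t = 𝓝[≠] t := by
  rw [sdiff_eq, nhdsWithin_inter_of_mem]
  exact mem_nhdsWithin_of_mem_nhds (Ici_mem_nhds ht)

section
variable {X : Type*} [MetricSpace X] {ε : ℝ} {x : X} {u : ℝ → X} {g m : ℝ → ℝ}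

/-- Admissibility in terms of `L²(μ_ε)`; the exceptional endpoint `t = 0` is dropped from the
differentiability condition, so that two-sided difference quotients can be used. -/
theorem admissible_iff (hε : 0 < ε) : Admissible ε x u m ↔
    u 0 = x ∧ (∀ t, 0 ≤ m t) ∧ MemLp m 2 (expMeasure ε) ∧
      (∀ s t, 0 ≤ s → s ≤ t → dist (u s) (u t) ≤ ∫ r in s..t, m r) ∧
      ∀ᵐ t ∂(volume.restrict (Ioi 0)),
        Tendsto (fun s => dist (u s) (u t) / |s - t|) (𝓝[≠] t) (𝓝 (m t)) := by
  have hIci : (volume.restrict (Ici (0 : ℝ))) = volume.restrict (Ioi 0) :=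
    (Measure.restrict_congr_set Ioi_ae_eq_Ici).symm
  constructor
  · rintro ⟨h0, ⟨hm, -⟩, hfin⟩
    refine ⟨h0, hm.nonneg, ?_, fun s t hs hst => ?_, ?_⟩
    · have hmeas : AEStronglyMeasurable m (expMeasure ε) := by
        refine AEStronglyMeasurable.mono_ac (expMeasure_absolutelyContinuous ε) ?_
        have hU : AEStronglyMeasurable m (volume.restrict (⋃ n : ℕ, Icc (0 : ℝ) n)) :=
          aestronglyMeasurable_iUnion_iff.2 fun n =>
            (hm.locInt 0 self_mem_Ici n (mem_Ici.2 n.cast_nonneg)).1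
        refine hU.mono_set fun t ht => ?_
        obtain ⟨n, hn⟩ := exists_nat_ge t
        exact mem_iUnion.2 ⟨n, (le_of_lt ht), hn⟩
      refine (memLp_two_iff_integrable_sq hmeas).2 ⟨hmeas.pow 2, ?_⟩
      rwa [hasFiniteIntegral_iff_ofReal (Eventually.of_forall fun t => sq_nonneg _)]
    · have := hm.dist_le s hs t (hs.trans hst) hst
      rwa [integral_Icc_eq_integral_Ioc, ← intervalIntegral.integral_of_le hst] at this
    · have h1 := hm.limit
      rw [hIci] at h1
      filter_upwards [h1, ae_restrict_mem measurableSet_Ioi] with t ht ht0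
      rwa [nhdsWithin_Ici_diff ht0] at ht
  · rintro ⟨h0, hn, hL, hd, hlim⟩
    refine ⟨h0, ⟨⟨hn, fun s hs t _ => (integrableOn_Icc_of_memLp hε hL hs t).1,
      fun s hs t _ hst => ?_, ?_⟩, fun s hs t _ => (integrableOn_Icc_of_memLp hε hL hs t).2⟩,
      hL.integrable_sq.lintegral_lt_top⟩
    · rw [integral_Icc_eq_integral_Ioc, ← intervalIntegral.integral_of_le hst]
      exact hd s t hs hst
    · rw [hIci]
      filter_upwards [hlim, ae_restrict_mem measurableSet_Ioi] with t ht ht0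
      rwa [nhdsWithin_Ici_diff ht0]

theorem continuousOn_of_dist_le (hε : 0 < ε) (hg : MemLp g 2 (expMeasure ε))
    (hd : ∀ s t, 0 ≤ s → s ≤ t → dist (u s) (u t) ≤ ∫ r in s..t, g r) :
    ContinuousOn u (Ici 0) := by
  have hP := continuous_primitive_indicator hε hg
  set P : ℝ → ℝ := fun t => ∫ s in (0 : ℝ)..t, (Ioi 0).indicator g s with hPdef
  have hsub : ∀ s t, 0 ≤ s → s ≤ t → dist (u s) (u t) ≤ |P t - P s| := by
    intro s t hs hst
    refine (hd s t hs hst).trans (le_of_eq_of_le ?_ (le_abs_self _))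
    rw [hPdef]
    simp only
    rw [intervalIntegral.integral_interval_sub_left (intervalIntegrable_indicator hε hg _ _)
      (intervalIntegrable_indicator hε hg _ _), intervalIntegral_indicator hs (hs.trans hst)]
  intro t ht
  rw [ContinuousWithinAt, tendsto_iff_dist_tendsto_zero]
  have hlim : Tendsto (fun s => |P s - P t|) (𝓝[Ici 0] t) (𝓝 0) := by
    have := ((hP.tendsto t).sub_const (P t)).abs
    simp only [sub_self, abs_zero] at this
    exact this.mono_left nhdsWithin_le_nhds
  refine squeeze_zero' (Eventually.of_forall fun _ => dist_nonneg) ?_ hlim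
  filter_upwards [self_mem_nhdsWithin] with s hs
  rcases le_total s t with h | h
  · rw [abs_sub_comm]; exact hsub s t hs h
  · rw [dist_comm]; exact hsub t s ht h

theorem controlled_of_dist_le (hε : 0 < ε) (h0 : u 0 = x) (hg : MemLp g 2 (expMeasure ε))
    (hd : ∀ s t, 0 ≤ s → s ≤ t → dist (u s) (u t) ≤ ∫ r in s..t, g r) :
    Controlled ε x u g :=
  ⟨continuousOn_of_dist_le hε hg hd, hg, fun t ht => by
    rw [← h0, dist_comm]; exact hd 0 t le_rfl ht⟩

theorem Admissible.controlled (hε : 0 < ε) (h : Admissible ε x u m) : Controlled ε x u m := by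
  obtain ⟨h0, -, hL, hd, -⟩ := (admissible_iff hε).1 h
  exact controlled_of_dist_le hε h0 hL hd

theorem intervalIntegral_indicator_max (hε : 0 < ε) (hg : MemLp g 2 (expMeasure ε)) (s t : ℝ) :
    ∫ r in s..t, (Ioi 0).indicator g r = ∫ r in max s 0..max t 0, g r := by
  have h0 : ∀ t, ∫ r in (0 : ℝ)..t, (Ioi 0).indicator g r = ∫ r in (0 : ℝ)..max t 0, g r := by
    intro t
    rcases le_total 0 t with ht | ht
    · rw [max_eq_left ht, intervalIntegral_indicator le_rfl ht]
    · rw [max_eq_right ht, intervalIntegral.integral_same]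
      refine intervalIntegral.integral_zero_ae (Eventually.of_forall fun r hr => ?_)
      rw [uIoc_of_ge ht] at hr
      exact indicator_of_notMem (not_lt.2 hr.2) _
  have hI := intervalIntegrable_indicator hε hg
  rw [← intervalIntegral.integral_interval_sub_left (hI 0 t) (hI 0 s), h0, h0,
    intervalIntegral.integral_interval_sub_left
      (intervalIntegrable_of_memLp hε hg le_rfl (le_max_right _ _))
      (intervalIntegrable_of_memLp hε hg le_rfl (le_max_right _ _))]

/-- A curve whose increments are controlled by an `L²(μ_ε)` function `g` is admissible, with a metric
derivative of modulus at most `|g|` a.e. -/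
theorem exists_admissible (hε : 0 < ε) (h0 : u 0 = x) (hg : MemLp g 2 (expMeasure ε))
    (hd : ∀ s t, 0 ≤ s → s ≤ t → dist (u s) (u t) ≤ ∫ r in s..t, g r) :
    ∃ m, Admissible ε x u m ∧ ∀ᵐ t ∂expMeasure ε, m t ^ 2 ≤ g t ^ 2 := by
  obtain ⟨m, hm, hm0, hmg, hmd, hmt⟩ := exists_metricDeriv (fun t => u (max t 0))
    ((Ioi 0).indicator g) (locallyIntegrable_indicator hε hg) (fun s t hst => by
      rw [intervalIntegral_indicator_max hε hg]
      exact hd _ _ (le_max_right _ _) (max_le_max_right _ hst))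
  have hle : ∀ᵐ t ∂expMeasure ε, m t ≤ |g t| := by
    have h1 := (expMeasure_absolutelyContinuous ε).ae_le
      (ae_restrict_of_ae (s := Ioi 0) hmg)
    filter_upwards [h1, ae_expMeasure_pos ε] with t ht ht0
    rwa [indicator_of_mem (mem_Ioi.2 ht0)] at ht
  refine ⟨m, (admissible_iff hε).2 ⟨h0, hm0, ?_, fun s t hs hst => ?_, ?_⟩, ?_⟩
  · refine hg.mono hm.aestronglyMeasurable ?_
    filter_upwards [hle] with t ht
    rwa [Real.norm_eq_abs, Real.norm_eq_abs, abs_of_nonneg (hm0 t)]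
  · have := hmd s t hst
    rwa [max_eq_left hs, max_eq_left (hs.trans hst)] at this
  · filter_upwards [ae_mono Measure.restrict_le_self hmt, ae_restrict_mem measurableSet_Ioi]
      with t ht ht0
    refine ht.congr' ?_
    filter_upwards [mem_nhdsWithin_of_mem_nhds (Ioi_mem_nhds ht0)] with s hs
    rw [max_eq_left (le_of_lt hs), max_eq_left (le_of_lt ht0)]
  · filter_upwards [hle] with t ht
    rw [← sq_abs (g t)]
    exact pow_le_pow_left₀ (hm0 t) ht 2

end

theorem WEDfun_mono {X : Type*} {φ : X → EReal} {ε : ℝ} {u : ℝ → X} {g m : ℝ → ℝ} (hε : 0 < ε)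
    (h : ∀ᵐ t ∂expMeasure ε, m t ^ 2 ≤ g t ^ 2) :
    WEDfun φ ε u m ≤ WEDfun φ ε u g := by
  have h1 : ∀ᵐ t ∂expMeasure ε, wedIntegrand φ ε u m t ≤ wedIntegrand φ ε u g t := by
    filter_upwards [h] with t ht
    unfold wedIntegrand
    gcongr
  unfold WEDfun eIntegral
  apply EReal.sub_le_sub
  · exact EReal.coe_ennreal_le_coe_ennreal_iff.2 (lintegral_mono_ae (h1.mono fun t ht =>
      EReal.toENNReal_le_toENNReal ht))
  · exact EReal.coe_ennreal_le_coe_ennreal_iff.2 (lintegral_mono_ae (h1.mono fun t ht =>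
      EReal.toENNReal_le_toENNReal (EReal.neg_le_neg_iff.2 ht)))

end WED

/-! ### Pointwise limits of equi-Hölder curves -/

namespace WED

/-- Cantor's diagonal argument for countably many properties of subsequences. -/
theorem exists_diagonal {Pr : ℕ → (ℕ → ℕ) → Prop}
    (hex : ∀ (i : ℕ) (j : ℕ → ℕ), StrictMono j → ∃ k : ℕ → ℕ, StrictMono k ∧ Pr i (j ∘ k))
    (hsub : ∀ (i : ℕ) (j k : ℕ → ℕ), StrictMono k → Pr i j → Pr i (j ∘ k))
    (htail : ∀ (i : ℕ) (j : ℕ → ℕ) (N : ℕ), Pr i (fun n => j (n + N)) → Pr i j) :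
    ∃ j, StrictMono j ∧ ∀ i, Pr i j := by
  choose! K hK hKP using hex
  let J : ℕ → ℕ → ℕ := fun i => Nat.rec (K 0 id) (fun i Ji => Ji ∘ K (i + 1) Ji) i
  have hJs : ∀ i, J (i + 1) = J i ∘ K (i + 1) (J i) := fun i => rfl
  have hJ : ∀ i, StrictMono (J i) := by
    intro i
    induction i with
    | zero => exact hK 0 id strictMono_id
    | succ i ih => rw [hJs]; exact ih.comp (hK _ _ ih)
  have hP : ∀ i, Pr i (J i) := by
    intro i
    cases i with
    | zero => exact hKP 0 id strictMono_id
    | succ i => rw [hJs]; exact hKP _ _ (hJ i)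
  let M : ℕ → ℕ → ℕ → ℕ := fun i n => Nat.rec id (fun n Mn => Mn ∘ K (i + n + 1) (J (i + n))) n
  have hMs : ∀ i n, M i (n + 1) = M i n ∘ K (i + n + 1) (J (i + n)) := fun i n => rfl
  have hM : ∀ i n, StrictMono (M i n) := by
    intro i n
    induction n with
    | zero => exact strictMono_id
    | succ n ih => rw [hMs]; exact ih.comp (hK _ _ (hJ _))
  have hJM : ∀ i n, J (i + n) = J i ∘ M i n := by
    intro i n
    induction n with
    | zero => rfl
    | succ n ih => rw [hMs, ← Function.comp_assoc, ← ih, ← hJs]; rfl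
  have he : ∀ i, StrictMono fun n => M i n (n + i) := by
    intro i
    refine strictMono_nat_of_lt_succ fun n => ?_
    rw [hMs]
    refine hM i n (lt_of_lt_of_le ?_ ((hK (i + n + 1) _ (hJ (i + n))).id_le _))
    simp only [id]
    omega
  have hd : ∀ i n, J (n + i) (n + i) = J i (M i n (n + i)) := by
    intro i n
    rw [add_comm n i, hJM]; rfl
  refine ⟨fun n => J n n, ?_, fun i => htail i _ i ?_⟩
  · have h0 := (hJ 0).comp (he 0)
    have : (fun n => J n n) = J 0 ∘ fun n => M 0 n (n + 0) := by
      funext n; exact hd 0 n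
    rw [this]; exact h0
  · have := hsub i (J i) _ (he i) (hP i)
    convert this using 1
    funext n
    exact hd i n

/-- An Ascoli-type selection. Compactness of the sublevels of `φ` applies only at times `τ_i(n)`,
depending on `n`, which are available in each interval `(p/(k+1), (p+1)/(k+1))`. Along a diagonal
subsequence the values at these times converge for every `i`; the uniform Hölder bound, the
completeness of `X` and the diagonal property of `conv` transfer the convergence to every `t ≥ 0`. -/
theorem SeqSetting.exists_pointwise_limit {X : Type*} [MetricSpace X] [CompleteSpace X]
    {φ : X → EReal} {ustar : X} {A B : ℝ} {conv : (ℕ → X) → X → Prop}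
    (S : SeqSetting φ ustar A B conv) {x : X} {u : ℕ → ℝ → X} (h0 : ∀ n, u n 0 = x)
    (hH : ∀ T, ∃ L : ℝ, 0 ≤ L ∧ ∀ n s t, 0 ≤ s → s ≤ t → t ≤ T →
      dist (u n s) (u n t) ≤ L * √(t - s))
    (hsub : ∀ a b, 0 ≤ a → a < b → ∃ c : ℝ, ∀ n, ∃ t, a < t ∧ t < b ∧ φ (u n t) ≤ (c : EReal)) :
    ∃ (j : ℕ → ℕ) (v : ℝ → X), StrictMono j ∧ ∀ t, 0 ≤ t → conv (fun n => u (j n) t) (v t) := by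
  let a : ℕ → ℝ := fun i => (i.unpair.1 : ℝ) / (i.unpair.2 + 1)
  let b : ℕ → ℝ := fun i => ((i.unpair.1 : ℝ) + 1) / (i.unpair.2 + 1)
  have ha : ∀ i, 0 ≤ a i := fun i => by positivity
  have hab : ∀ i, a i < b i := fun i => by
    simp only [a, b]
    gcongr
    linarith
  choose c τ hτ1 hτ2 hτc using fun i => hsub (a i) (b i) (ha i) (hab i)
  have hτ0 : ∀ i n, 0 ≤ τ i n := fun i n => (ha i).trans (hτ1 i n).le
  have hbdd : ∀ i, ∃ C : ℝ, ∀ n k, dist (u n (τ i n)) (u k (τ i k)) ≤ C := by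
    intro i
    obtain ⟨L, hL, hLd⟩ := hH (b i)
    have h1 : ∀ n, dist x (u n (τ i n)) ≤ L * √(b i) := by
      intro n
      have h2 := hLd n 0 (τ i n) le_rfl (hτ0 i n) (hτ2 i n).le
      rw [h0, sub_zero] at h2
      refine h2.trans ?_
      gcongr
      exact (hτ2 i n).le
    refine ⟨L * √(b i) + L * √(b i), fun n k => (dist_triangle_left _ _ x).trans ?_⟩
    exact add_le_add (h1 n) (h1 k)
  obtain ⟨j, hj, hconv⟩ := exists_diagonal
    (Pr := fun i j => ∃ y, conv (fun n => u (j n) (τ i (j n))) y)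
    (fun i j hj => by
      obtain ⟨C, hC⟩ := hbdd i
      obtain ⟨y, k, hk, hy⟩ := S.cpt (fun n => u (j n) (τ i (j n)))
        ⟨c i, fun n => hτc i (j n)⟩ ⟨C, fun n k => hC _ _⟩
      exact ⟨k, hk, y, hy⟩)
    (fun i j k hk ⟨y, hy⟩ => ⟨y, S.comp _ _ _ hy hk⟩)
    (fun i j N ⟨y, hy⟩ => ⟨y, S.tail _ _ N hy⟩)
  choose y hy using hconv
  have key : ∀ t, 0 ≤ t → ∃ v, conv (fun n => u (j n) t) v := by
    intro t ht
    let I : ℕ → ℕ := fun k => Nat.pair ⌊t * (k + 1)⌋₊ k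
    obtain ⟨L, hL, hLd⟩ := hH (t + 1)
    let δ : ℕ → ℝ := fun k => L * √(1 / ((k : ℝ) + 1))
    have hδ : Tendsto δ atTop (𝓝 0) := by
      have := (tendsto_one_div_add_atTop_nhds_zero_nat (𝕜 := ℝ)).sqrt.const_mul L
      rw [Real.sqrt_zero, mul_zero] at this
      exact this
    have hIa : ∀ k, a (I k) ≤ t := by
      intro k
      simp only [a, I, Nat.unpair_pair]
      rw [div_le_iff₀ (by positivity)]
      exact Nat.floor_le (by positivity)
    have hIb : ∀ k, t ≤ b (I k) := by
      intro k
      simp only [b, I, Nat.unpair_pair]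
      rw [le_div_iff₀ (by positivity)]
      exact (Nat.lt_floor_add_one _).le
    have hIab : ∀ k, b (I k) - a (I k) = 1 / ((k : ℝ) + 1) := by
      intro k
      simp only [a, b, I, Nat.unpair_pair]
      ring
    have hk1 : ∀ k : ℕ, 1 / ((k : ℝ) + 1) ≤ 1 := by
      intro k
      rw [div_le_one (by positivity)]
      linarith [k.cast_nonneg (α := ℝ)]
    have hclose : ∀ k n, dist (u n t) (u n (τ (I k) n)) ≤ δ k := by
      intro k n
      have e1 := hτ1 (I k) n
      have e2 := hτ2 (I k) n
      have e3 := hIa k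
      have e4 := hIb k
      have e5 := hIab k
      have e6 := hk1 k
      rcases le_total t (τ (I k) n) with h | h
      · refine (hLd n _ _ ht h (by linarith)).trans ?_
        simp only [δ]
        gcongr
        linarith
      · rw [dist_comm]
        refine (hLd n _ _ (hτ0 _ _) h (by linarith)).trans ?_
        simp only [δ]
        gcongr
        linarith
    have hδanti : ∀ N k, N ≤ k → δ k ≤ δ N := by
      intro N k h
      simp only [δ]
      gcongr
    have hc : CauchySeq fun k => y (I k) := by
      refine cauchySeq_of_le_tendsto_0 (fun N => δ N + δ N) (fun k l N hk hl => ?_)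
        (by simpa using hδ.add hδ)
      refine S.dist_le _ _ _ _ (fun _ => δ N + δ N) _ (hy (I k)) (hy (I l)) tendsto_const_nhds
        fun n => ?_
      refine (dist_triangle_left _ _ (u (j n) t)).trans ?_
      exact add_le_add ((hclose k _).trans (hδanti _ _ hk)) ((hclose l _).trans (hδanti _ _ hl))
    obtain ⟨v, hv⟩ := cauchySeq_tendsto_of_complete hc
    exact ⟨v, S.diag _ v _ _ δ (fun k => hy (I k)) hv hδ fun k n => hclose k (j n)⟩
  have : Nonempty X := ⟨x⟩
  choose! v hv using key
  exact ⟨j, v, hj, hv⟩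

end WED

/-! ### Weak convergence in `L²(μ_ε)` -/

namespace WED

/-- Bounded sequences in a separable Hilbert space have weakly convergent subsequences. -/
theorem exists_weak_limit_hilbert {H : Type*} [NormedAddCommGroup H] [InnerProductSpace ℝ H]
    [CompleteSpace H] [SecondCountableTopology H] (f : ℕ → H) (C : ℝ) (hC : ∀ n, ‖f n‖ ≤ C) :
    ∃ (j : ℕ → ℕ) (g : H), StrictMono j ∧
      ∀ h, Tendsto (fun n => inner ℝ (f (j n)) h) atTop (𝓝 (inner ℝ g h)) := by
  have hs := WeakDual.isSeqCompact_closedBall ℝ H 0 C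
  obtain ⟨a, -, j, hj, ha⟩ := hs (x := fun n =>
    StrongDual.toWeakDual (InnerProductSpace.toDual ℝ H (f n))) (fun n => by
      rw [mem_preimage, Metric.mem_closedBall, dist_zero_right]
      exact ((InnerProductSpace.toDual ℝ H).norm_map (f n)).trans_le (hC n))
  refine ⟨j, (InnerProductSpace.toDual ℝ H).symm (WeakDual.toStrongDual a), hj, fun h => ?_⟩
  rw [InnerProductSpace.toDual_symm_apply]
  exact (tendsto_iff_forall_eval_tendsto_topDualPairing.1 ha) h

theorem inner_toLp {ν : Measure ℝ} {f g : ℝ → ℝ} (hf : MemLp f 2 ν) (hg : MemLp g 2 ν) :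
    inner ℝ (hf.toLp f) (hg.toLp g) = ∫ t, f t * g t ∂ν := by
  rw [L2.inner_def]
  refine integral_congr_ae ?_
  filter_upwards [hf.coeFn_toLp, hg.coeFn_toLp] with t h1 h2
  rw [h1, h2, RCLike.inner_apply, conj_trivial, mul_comm]

theorem norm_toLp_sq {ν : Measure ℝ} {f : ℝ → ℝ} (hf : MemLp f 2 ν) :
    ‖hf.toLp f‖ ^ 2 = ∫ t, f t ^ 2 ∂ν := by
  rw [← real_inner_self_eq_norm_sq, inner_toLp]
  simp only [sq]

theorem exists_weak_limit {ε : ℝ} (hε : 0 < ε) {m : ℕ → ℝ → ℝ}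
    (hm : ∀ n, MemLp (m n) 2 (expMeasure ε)) {C : ℝ}
    (hC : ∀ n, ∫ t, m n t ^ 2 ∂expMeasure ε ≤ C) :
    ∃ (j : ℕ → ℕ) (g : ℝ → ℝ), StrictMono j ∧ MemLp g 2 (expMeasure ε) ∧
      ∀ h, MemLp h 2 (expMeasure ε) → Tendsto (fun n => ∫ t, m (j n) t * h t ∂expMeasure ε) atTop
        (𝓝 (∫ t, g t * h t ∂expMeasure ε)) := by
  have := isFiniteMeasure_expMeasure hε
  have : Fact ((2 : ℝ≥0∞) ≠ ⊤) := ⟨by norm_num⟩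
  obtain ⟨j, g, hj, hg⟩ := exists_weak_limit_hilbert (fun n => (hm n).toLp (m n)) (√C) (fun n => by
    apply Real.le_sqrt_of_sq_le
    rw [norm_toLp_sq]
    exact hC n)
  refine ⟨j, g, hj, Lp.memLp g, fun h hh => ?_⟩
  have := hg (hh.toLp h)
  simp only [inner_toLp] at this
  convert this using 2
  rw [← inner_toLp (Lp.memLp g) hh, Lp.toLp_coeFn]

theorem primitive_congr {ε : ℝ} (hε : 0 < ε) {f g : ℝ → ℝ} (h : f =ᵐ[expMeasure ε] g) {t : ℝ}
    (ht : 0 ≤ t) : ∫ s in (0 : ℝ)..t, f s = ∫ s in (0 : ℝ)..t, g s := by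
  rw [intervalIntegral.integral_of_le ht, intervalIntegral.integral_of_le ht]
  refine integral_congr_ae ?_
  have h1 := (restrict_absolutelyContinuous_expMeasure hε).ae_le h
  exact ae_restrict_of_ae_restrict_of_subset Ioc_subset_Ioi_self h1

/-- The adjoint in `L²(μ_ε)` of the primitive operator `f ↦ R_f = ∫₀^· f`, which is bounded by
Hardy's inequality. -/
theorem exists_adjoint {ε : ℝ} (hε : 0 < ε) {k : ℝ → ℝ} (hk : MemLp k 2 (expMeasure ε)) :
    ∃ h, MemLp h 2 (expMeasure ε) ∧ ∀ f, MemLp f 2 (expMeasure ε) →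
      ∫ t, k t * (∫ s in (0 : ℝ)..t, f s) ∂expMeasure ε = ∫ t, f t * h t ∂expMeasure ε := by
  have hR : ∀ f : Lp ℝ 2 (expMeasure ε), MemLp (fun t => ∫ s in (0 : ℝ)..t, f s) 2 (expMeasure ε) :=
    fun f => (hardy_real hε (Lp.memLp f)).1
  let T0 : Lp ℝ 2 (expMeasure ε) →ₗ[ℝ] Lp ℝ 2 (expMeasure ε) :=
    { toFun := fun f => (hR f).toLp _
      map_add' := fun f g => by
        rw [← MemLp.toLp_add, MemLp.toLp_eq_toLp_iff]
        filter_upwards [ae_expMeasure_pos ε] with t ht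
        rw [primitive_congr hε (Lp.coeFn_add f g) ht.le]
        exact intervalIntegral.integral_add
          (intervalIntegrable_of_memLp hε (Lp.memLp f) le_rfl ht.le)
          (intervalIntegrable_of_memLp hε (Lp.memLp g) le_rfl ht.le)
      map_smul' := fun c f => by
        rw [RingHom.id_apply, ← MemLp.toLp_const_smul, MemLp.toLp_eq_toLp_iff]
        filter_upwards [ae_expMeasure_pos ε] with t ht
        rw [primitive_congr hε (Lp.coeFn_smul c f) ht.le]
        exact intervalIntegral.integral_smul c _ }
  let T := T0.mkContinuous (2 * ε) fun f => by
    refine le_of_sq_le_sq ?_ (by positivity)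
    change ‖(hR f).toLp _‖ ^ 2 ≤ _
    have h1 := (hardy_real hε (Lp.memLp f)).2
    have h2 := norm_toLp_sq (Lp.memLp f)
    rw [Lp.toLp_coeFn] at h2
    rw [norm_toLp_sq, mul_pow, h2]
    linarith
  refine ⟨ContinuousLinearMap.adjoint T (hk.toLp k), Lp.memLp _, fun f hf => ?_⟩
  rw [← inner_toLp hf (Lp.memLp _), Lp.toLp_coeFn, ContinuousLinearMap.adjoint_inner_right,
    real_inner_comm]
  change _ = inner ℝ (hk.toLp k) ((hR (hf.toLp f)).toLp _)
  rw [inner_toLp]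
  refine integral_congr_ae ?_
  filter_upwards [ae_expMeasure_pos ε] with t ht
  rw [primitive_congr hε hf.coeFn_toLp ht.le]

/-- A test function for which the pairing in `L²(μ_ε)` is integration over `(s, t]`; thus weak
convergence of the speeds gives convergence of their integrals over intervals. -/
theorem exists_interval_test {ε : ℝ} (hε : 0 < ε) {s t : ℝ} (hs : 0 ≤ s) (hst : s ≤ t) :
    ∃ h, MemLp h 2 (expMeasure ε) ∧ ∀ f : ℝ → ℝ,
      ∫ r, f r * h r ∂expMeasure ε = ∫ r in s..t, f r := by
  have := isFiniteMeasure_expMeasure hε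
  refine ⟨(Ioc s t).indicator fun r => ε * Real.exp (r / ε), ?_, fun f => ?_⟩
  · refine MemLp.of_bound (Measurable.aestronglyMeasurable (by measurability))
      (ε * Real.exp (t / ε)) (Eventually.of_forall fun r => ?_)
    by_cases hr : r ∈ Ioc s t
    · rw [indicator_of_mem hr, Real.norm_of_nonneg (by positivity)]
      gcongr
      exact hr.2
    · rw [indicator_of_notMem hr, norm_zero]
      positivity
  · rw [expMeasure, integral_withDensity_eq_integral_toReal_smul (measurable_expDensity ε)
      (by simp), intervalIntegral.integral_of_le hst,
      ← integral_indicator (measurableSet_Ioi), ← integral_indicator (measurableSet_Ioc)]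
    congr 1
    funext r
    by_cases hr : r ∈ Ioc s t
    · rw [indicator_of_mem hr, indicator_of_mem (mem_Ioi.2 (hs.trans_lt hr.1)),
        indicator_of_mem hr, ENNReal.toReal_ofReal (by positivity), smul_eq_mul, neg_div,
        Real.exp_neg]
      have := Real.exp_pos (r / ε)
      field_simp
    · simp [hr]

end WED

/-! ### Lower semicontinuity -/

namespace WED

/-- Hölder continuity with exponent `1/2` of primitives of `L²(μ_ε)` functions. -/
theorem intervalIntegral_le_sqrt {ε : ℝ} (hε : 0 < ε) {m : ℝ → ℝ} (hm : MemLp m 2 (expMeasure ε))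
    {s t T : ℝ} (hs : 0 ≤ s) (hst : s ≤ t) (htT : t ≤ T) :
    ∫ r in s..t, m r ≤ √(ε * Real.exp (T / ε) * ∫ r, m r ^ 2 ∂expMeasure ε) * √(t - s) := by
  have hsub : Ioc s t ⊆ Ioc 0 T := fun r hr => ⟨hs.trans_lt hr.1, hr.2.trans htT⟩
  have hm1 : MemLp m 2 (volume.restrict (Ioc s t)) :=
    (integrableOn_Ioc_of_memLp hε hm T).1.mono_measure (Measure.restrict_mono hsub le_rfl)
  have h1 : MemLp (fun _ : ℝ => (1 : ℝ)) 2 (volume.restrict (Ioc s t)) := memLp_const 1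
  have h := (le_abs_self _).trans (abs_real_inner_le_norm (hm1.toLp m) (h1.toLp _))
  rw [inner_toLp] at h
  simp only [mul_one] at h
  rw [intervalIntegral.integral_of_le hst]
  refine h.trans (mul_le_mul ?_ ?_ (norm_nonneg _) (Real.sqrt_nonneg _))
  · apply Real.le_sqrt_of_sq_le
    rw [norm_toLp_sq]
    have h2 := integral_mono_measure (f := fun r => m r ^ 2)
      ((Measure.restrict_mono hsub le_rfl).trans (restrict_Ioc_le hε T))
      (Eventually.of_forall fun r => sq_nonneg _)
      (hm.integrable_sq.smul_measure ENNReal.ofReal_ne_top)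
    rwa [integral_smul_measure, ENNReal.toReal_ofReal (by positivity), smul_eq_mul] at h2
  · apply Real.le_sqrt_of_sq_le
    rw [norm_toLp_sq]
    simp [hst]

/-- The quadratic part is a convex functional on `L²(μ_ε)`, hence lies above its linearization at `g`;
the remainder `∫ (ε/2)(f-g)² - B R_{f-g}²` is nonnegative by Hardy's inequality. -/
theorem quadPart_expand {X : Type*} [MetricSpace X] {ustar x : X} {A B ε : ℝ} (hε : 0 < ε)
    (hεB : B ≤ 1 / (16 * ε)) (hB : 0 ≤ B) {f g : ℝ → ℝ} (hf : MemLp f 2 (expMeasure ε))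
    (hg : MemLp g 2 (expMeasure ε)) :
    (∫ t, quadPart ε ustar A B x g t ∂expMeasure ε) +
      (ε * (∫ t, f t * g t ∂expMeasure ε - ∫ t, g t * g t ∂expMeasure ε) -
        2 * B * (∫ t, (∫ s in (0 : ℝ)..t, g s) * (∫ s in (0 : ℝ)..t, f s) ∂expMeasure ε -
          ∫ t, (∫ s in (0 : ℝ)..t, g s) * (∫ s in (0 : ℝ)..t, g s) ∂expMeasure ε)) ≤
      ∫ t, quadPart ε ustar A B x f t ∂expMeasure ε := by
  have := isFiniteMeasure_expMeasure hε
  have hRf := (hardy_real hε hf).1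
  have hRg := (hardy_real hε hg).1
  have hfg := hf.sub hg
  have hRfg := (hardy_real hε hfg).1
  have h0 := quadPart_ge (ustar := ustar) (A := 0) (x := ustar) hε hεB hB hfg
  have h1 : 0 ≤ ∫ t, (f - g) t ^ 2 ∂expMeasure ε := integral_nonneg fun t => sq_nonneg _
  have i1 := hf.integrable_sq
  have i3 : Integrable (fun t => f t * g t) (expMeasure ε) := hf.integrable_mul hg
  have i4 : Integrable (fun t => g t * g t) (expMeasure ε) := hg.integrable_mul hg
  have i5 : Integrable (fun t => (∫ s in (0 : ℝ)..t, g s) * (∫ s in (0 : ℝ)..t, f s))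
    (expMeasure ε) := hRg.integrable_mul hRf
  have i6 : Integrable (fun t => (∫ s in (0 : ℝ)..t, g s) * (∫ s in (0 : ℝ)..t, g s))
    (expMeasure ε) := hRg.integrable_mul hRg
  have q1 : Integrable (quadPart ε ustar A B x g) (expMeasure ε) := integrable_quadPart hε hg
  have q2 : Integrable (quadPart ε ustar 0 B ustar (f - g)) (expMeasure ε) :=
    integrable_quadPart hε hfg
  have key : ∫ t, quadPart ε ustar A B x f t ∂expMeasure ε =
      ∫ t, (quadPart ε ustar 0 B ustar (f - g) t + (quadPart ε ustar A B x g t +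
        (ε * (f t * g t - g t * g t) - 2 * B * ((∫ s in (0 : ℝ)..t, g s) *
          (∫ s in (0 : ℝ)..t, f s) - (∫ s in (0 : ℝ)..t, g s) * (∫ s in (0 : ℝ)..t, g s)))))
        ∂expMeasure ε := by
    refine integral_congr_ae ?_
    filter_upwards [ae_expMeasure_pos ε] with t ht
    have hs : ∫ s in (0 : ℝ)..t, (f - g) s = (∫ s in (0 : ℝ)..t, f s) - ∫ s in (0 : ℝ)..t, g s :=
      intervalIntegral.integral_sub (intervalIntegrable_of_memLp hε hf le_rfl ht.le)
        (intervalIntegrable_of_memLp hε hg le_rfl ht.le)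
    simp only [quadPart]
    rw [hs]
    simp only [Pi.sub_apply, dist_self]
    ring
  have i7 : Integrable (fun t => ε * (f t * g t - g t * g t)) (expMeasure ε) :=
    (i3.sub i4).const_mul _
  have i8 : Integrable (fun t => 2 * B * ((∫ s in (0 : ℝ)..t, g s) * (∫ s in (0 : ℝ)..t, f s) -
      (∫ s in (0 : ℝ)..t, g s) * (∫ s in (0 : ℝ)..t, g s))) (expMeasure ε) :=
    (i5.sub i6).const_mul _
  rw [key, integral_add q2, integral_add q1, integral_sub i7 i8,
    integral_const_mul, integral_const_mul, integral_sub i3 i4, integral_sub i5 i6]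
  · simp only [dist_self] at h0
    have : 0 ≤ ε / 4 * ∫ t, (f - g) t ^ 2 ∂expMeasure ε := by positivity
    linarith
  · exact i7.sub i8
  · exact q1.add (i7.sub i8)

section
variable {X : Type*} [MetricSpace X] {φ : X → EReal} {ustar : X}
    {A B : ℝ} {conv : (ℕ → X) → X → Prop} {ε : ℝ} {x : X}

theorem expMeasure_Ioo_pos (hε : 0 < ε) {a b : ℝ} (ha : 0 ≤ a) (hab : a < b) :
    0 < (expMeasure ε).real (Ioo a b) := by
  have := isFiniteMeasure_expMeasure hε
  refine ENNReal.toReal_pos (fun h => ?_) (measure_ne_top _ _)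
  have h1 := restrict_absolutelyContinuous_expMeasure hε h
  rw [Measure.restrict_apply measurableSet_Ioo,
    inter_eq_left.2 (fun r hr => mem_Ioi.2 (ha.trans_lt hr.1)), Real.volume_Ioo,
    ENNReal.ofReal_eq_zero] at h1
  linarith

/-- By Chebyshev's inequality, a curve of bounded energy meets a fixed sublevel of `φ` in every open
interval of times. -/
theorem exists_sublevel (hε : 0 < ε) (hB : 0 ≤ B) (C : ℝ) {a b : ℝ} (ha : 0 ≤ a) (hab : a < b) :
    ∃ c : ℝ, ∀ (u : ℝ → X) (g : ℝ → ℝ),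
      ∫⁻ t, shifted φ ustar A B x u g t ∂expMeasure ε ≤ ENNReal.ofReal C →
      ∃ t, a < t ∧ t < b ∧ φ (u t) ≤ (c : EReal) := by
  have hp := expMeasure_Ioo_pos hε ha hab
  have := isFiniteMeasure_expMeasure hε
  set K := (|C| + 1) / (expMeasure ε).real (Ioo a b) with hK
  refine ⟨K - (B * dist x ustar ^ 2 + A), fun u g h => ?_⟩
  by_contra! hcon
  have h1 : ENNReal.ofReal (|C| + 1) ≤ ∫⁻ t, shifted φ ustar A B x u g t ∂expMeasure ε := by
    calc ENNReal.ofReal (|C| + 1) = ENNReal.ofReal K * expMeasure ε (Ioo a b) := by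
          rw [← ENNReal.ofReal_toReal (measure_ne_top (expMeasure ε) (Ioo a b)),
            ← ENNReal.ofReal_mul (by positivity), hK]
          congr 1
          change _ = _ / (expMeasure ε).real (Ioo a b) * (expMeasure ε).real (Ioo a b)
          field_simp
      _ = ∫⁻ t in Ioo a b, ENNReal.ofReal K ∂expMeasure ε := by rw [setLIntegral_const]
      _ ≤ ∫⁻ t in Ioo a b, shifted φ ustar A B x u g t ∂expMeasure ε := by
          refine setLIntegral_mono' measurableSet_Ioo fun t ht => ?_
          have h2 : ENNReal.ofReal K = EReal.toENNReal (K : EReal) := by simp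
          rw [h2]
          refine EReal.toENNReal_le_toENNReal ?_
          calc (K : EReal) ≤ ((K - (B * dist x ustar ^ 2 + A) : ℝ) : EReal) +
                ((B * (∫ s in (0 : ℝ)..t, g s) ^ 2 + (B * dist x ustar ^ 2 + A) : ℝ) : EReal) := by
                rw [← EReal.coe_add]
                apply EReal.coe_le_coe
                have : 0 ≤ B * (∫ s in (0 : ℝ)..t, g s) ^ 2 := by positivity
                linarith
            _ ≤ _ := by
                gcongr
                exact (hcon t ht.1 ht.2).le
      _ ≤ _ := setLIntegral_le_lintegral _ _
  have h3 := (ENNReal.ofReal_le_ofReal_iff' ).1 (h1.trans h)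
  have := abs_nonneg C
  have := le_abs_self C
  rcases h3 with h3 | h3 <;> linarith

/-- Pointwise lower semicontinuity of the shifted potential. -/
theorem SeqSetting.shifted_le_liminf (S : SeqSetting φ ustar A B conv) {U : ℕ → ℝ → X}
    {M : ℕ → ℝ → ℝ} {v : ℝ → X} {g : ℝ → ℝ} {t : ℝ}
    (hconv : conv (fun n => U n t) (v t)) (hbdd : ∃ C : ℝ, ∀ n k, dist (U n t) (U k t) ≤ C)
    (hR : Tendsto (fun n => ∫ s in (0 : ℝ)..t, M n s) atTop (𝓝 (∫ s in (0 : ℝ)..t, g s))) :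
    shifted φ ustar A B x v g t ≤ liminf (fun n => shifted φ ustar A B x (U n) (M n) t) atTop := by
  have h1 := S.lsc _ _ hbdd hconv
  have h2 : Tendsto (fun n => ((B * (∫ s in (0 : ℝ)..t, M n s) ^ 2 +
      (B * dist x ustar ^ 2 + A) : ℝ) : EReal)) atTop
      (𝓝 ((B * (∫ s in (0 : ℝ)..t, g s) ^ 2 + (B * dist x ustar ^ 2 + A) : ℝ) : EReal)) :=
    (continuous_coe_real_ereal.tendsto _).comp (((hR.pow 2).const_mul B).add_const _)
  have h3 : φ (v t) + ((B * (∫ s in (0 : ℝ)..t, g s) ^ 2 + (B * dist x ustar ^ 2 + A) : ℝ) : EReal)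
      ≤ liminf (fun n => φ (U n t) + ((B * (∫ s in (0 : ℝ)..t, M n s) ^ 2 +
      (B * dist x ustar ^ 2 + A) : ℝ) : EReal)) atTop := by
    refine le_trans (add_le_add h1 h2.liminf_eq.ge) ?_
    refine EReal.le_liminf_add
  have h4 := Monotone.map_liminf_of_continuousAt (F := atTop)
    (f := EReal.toENNReal) (fun a b h => EReal.toENNReal_le_toENNReal h)
    (fun n => φ (U n t) + ((B * (∫ s in (0 : ℝ)..t, M n s) ^ 2 +
      (B * dist x ustar ^ 2 + A) : ℝ) : EReal)) EReal.continuous_toENNReal.continuousAt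
  exact (EReal.toENNReal_le_toENNReal h3).trans h4.le

end
end WED

/-! ### Existence of minimizers -/

namespace WED

section
variable {X : Type*} [MetricSpace X] {φ : X → EReal} {ustar : X}
    {A B : ℝ} {conv : (ℕ → X) → X → Prop} {ε : ℝ} {x : X}

/-- A lower bound for the functional on curves starting at `x` which depends on `x` only. -/
theorem SeqSetting.WEDfun_ge (S : SeqSetting φ ustar A B conv) (hε : 0 < ε)
    (hεB : B ≤ 1 / (16 * ε)) {u : ℝ → X} {g : ℝ → ℝ} (h : Controlled ε x u g) :
    ((-((B * dist x ustar ^ 2 + A) * (expMeasure ε).real univ) : ℝ) : EReal) ≤ WEDfun φ ε u g := by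
  rw [(S.eIntegral_eq hε h).1]
  have h1 := quadPart_ge (ustar := ustar) (A := A) (x := x) hε hεB S.hB h.memLp
  have h2 : 0 ≤ ε / 4 * ∫ t, g t ^ 2 ∂expMeasure ε :=
    mul_nonneg (by positivity) (integral_nonneg fun t => sq_nonneg _)
  refine le_trans (EReal.coe_le_coe (by linarith)) (le_add_of_nonneg_left (EReal.coe_ennreal_nonneg _))

theorem SeqSetting.Veps_ne_bot (S : SeqSetting φ ustar A B conv) (hε : 0 < ε)
    (hεB : B ≤ 1 / (16 * ε)) (x : X) : Veps φ ε x ≠ ⊥ := by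
  have : ((-((B * dist x ustar ^ 2 + A) * (expMeasure ε).real univ) : ℝ) : EReal) ≤ Veps φ ε x :=
    le_iInf fun p => S.WEDfun_ge hε hεB (p.2.controlled hε)
  exact ne_bot_of_le_ne_bot (EReal.coe_ne_bot _) this

theorem Veps_le {u : ℝ → X} {m : ℝ → ℝ} (h : Admissible ε x u m) :
    Veps φ ε x ≤ WEDfun φ ε u m :=
  iInf_le (fun p : {p : (ℝ → X) × (ℝ → ℝ) // Admissible ε x p.1 p.2} => WEDfun φ ε p.1.1 p.1.2)
    ⟨(u, m), h⟩

theorem isMinimizer_iff {u : ℝ → X} {m : ℝ → ℝ} :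
    IsMinimizer φ ε x u m ↔ Admissible ε x u m ∧ WEDfun φ ε u m = Veps φ ε x :=
  ⟨fun h => ⟨h.1, le_antisymm (le_iInf fun p => h.2 _ _ p.2) (Veps_le h.1)⟩,
    fun h => ⟨h.1, fun _ _ hv => h.2.trans_le (Veps_le hv)⟩⟩

/-- A minimizing sequence, with its energy split into the nonnegative part `e n` and the quadratic
part, and the resulting uniform bounds. -/
theorem SeqSetting.exists_minimizing_seq (S : SeqSetting φ ustar A B conv) (hε : 0 < ε)
    (hεB : B ≤ 1 / (16 * ε)) {v : ℝ} (hv : Veps φ ε x = (v : EReal)) :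
    ∃ (u : ℕ → ℝ → X) (m : ℕ → ℝ → ℝ) (C : ℝ), (∀ n, Admissible ε x (u n) (m n)) ∧
      (∀ n, ∫ t, m n t ^ 2 ∂expMeasure ε ≤ C) ∧
      (∀ n, ∫⁻ t, shifted φ ustar A B x (u n) (m n) t ∂expMeasure ε ≤ ENNReal.ofReal C) ∧
      ∀ n : ℕ, ∃ e : ℝ, 0 ≤ e ∧
        ∫⁻ t, shifted φ ustar A B x (u n) (m n) t ∂expMeasure ε = ENNReal.ofReal e ∧
        e + ∫ t, quadPart ε ustar A B x (m n) t ∂expMeasure ε ≤ v + 1 / ((n : ℝ) + 1) := by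
  have hex : ∀ n : ℕ, ∃ p : {p : (ℝ → X) × (ℝ → ℝ) // Admissible ε x p.1 p.2},
      WEDfun φ ε p.1.1 p.1.2 < ((v + 1 / ((n : ℝ) + 1) : ℝ) : EReal) := by
    intro n
    refine iInf_lt_iff.1 (lt_of_eq_of_lt hv (EReal.coe_lt_coe ?_))
    have : (0 : ℝ) < 1 / ((n : ℝ) + 1) := by positivity
    linarith
  choose p hp using hex
  set q0 := (B * dist x ustar ^ 2 + A) * (expMeasure ε).real univ with hq0
  have hE : ∀ n : ℕ, ∃ e : ℝ, 0 ≤ e ∧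
      ∫⁻ t, shifted φ ustar A B x (p n).1.1 (p n).1.2 t ∂expMeasure ε = ENNReal.ofReal e ∧
      e + ∫ t, quadPart ε ustar A B x (p n).1.2 t ∂expMeasure ε ≤ v + 1 / ((n : ℝ) + 1) := by
    intro n
    have h1 := (hp n).le
    rw [(S.eIntegral_eq hε ((p n).2.controlled hε)).1] at h1
    generalize ∫⁻ t, shifted φ ustar A B x (p n).1.1 (p n).1.2 t ∂expMeasure ε = E at h1
    have hE : E ≠ ⊤ := by
      rintro rfl
      rw [EReal.coe_ennreal_top, EReal.top_add_coe, top_le_iff] at h1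
      exact EReal.coe_ne_top _ h1
    lift E to NNReal using hE
    refine ⟨E, E.2, (ENNReal.ofReal_coe_nnreal).symm, ?_⟩
    exact EReal.coe_le_coe_iff.1 h1
  have hn1 : ∀ n : ℕ, 1 / ((n : ℝ) + 1) ≤ 1 := by
    intro n
    rw [div_le_one (by positivity)]
    linarith [n.cast_nonneg (α := ℝ)]
  have hq : ∀ n, ε / 4 * ∫ t, (p n).1.2 t ^ 2 ∂expMeasure ε - q0 ≤
      ∫ t, quadPart ε ustar A B x (p n).1.2 t ∂expMeasure ε := fun n =>
    quadPart_ge (ustar := ustar) (A := A) (x := x) hε hεB S.hB ((p n).2.controlled hε).memLp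
  have hsq : ∀ n, 0 ≤ ∫ t, (p n).1.2 t ^ 2 ∂expMeasure ε := fun n =>
    integral_nonneg fun t => sq_nonneg _
  refine ⟨fun n => (p n).1.1, fun n => (p n).1.2, max (4 / ε * (v + 1 + q0)) (v + 1 + q0),
    fun n => (p n).2, fun n => ?_, fun n => ?_, hE⟩
  · obtain ⟨e, he0, -, he⟩ := hE n
    refine le_trans ?_ (le_max_left _ _)
    have h2 : ε / 4 * ∫ t, (p n).1.2 t ^ 2 ∂expMeasure ε ≤ v + 1 + q0 := by
      linarith [hq n, hn1 n]
    calc ∫ t, (p n).1.2 t ^ 2 ∂expMeasure ε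
        = 4 / ε * (ε / 4 * ∫ t, (p n).1.2 t ^ 2 ∂expMeasure ε) := by field_simp
      _ ≤ _ := by gcongr
  · obtain ⟨e, he0, he1, he⟩ := hE n
    rw [he1]
    refine ENNReal.ofReal_le_ofReal (le_trans ?_ (le_max_right _ _))
    have := mul_nonneg (show 0 ≤ ε / 4 by positivity) (hsq n)
    linarith [hq n, hn1 n]

/-- The direct method: the speeds of a minimizing sequence converge weakly in `L²(μ_ε)` to some `g`
and the curves converge pointwise to some `w`, whose increments are controlled by `g`. Fatou's
lemma handles the shifted potential and convexity the quadratic part, so the energy of `w` computed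
with `g` is at most `V_ε(x)`; replacing `g` by the metric derivative of `w` only decreases it. -/
theorem SeqSetting.exists_minimizer [CompleteSpace X] (S : SeqSetting φ ustar A B conv) (hε : 0 < ε)
    (hεB : B ≤ 1 / (16 * ε)) (hx : Veps φ ε x ≠ ⊤) :
    ∃ (u : ℝ → X) (m : ℝ → ℝ), IsMinimizer φ ε x u m := by
  obtain ⟨V, hV⟩ : ∃ V : ℝ, Veps φ ε x = (V : EReal) :=
    ⟨_, (EReal.coe_toReal hx (S.Veps_ne_bot hε hεB x)).symm⟩
  obtain ⟨u, m, C, hadm, hmC, hEC, hEq⟩ := S.exists_minimizing_seq hε hεB hV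
  have hctl := fun n => (hadm n).controlled hε
  have hadm' := fun n => (admissible_iff hε).1 (hadm n)
  obtain ⟨j₁, g, hj₁, hg, hweak₁⟩ := exists_weak_limit hε (fun n => (hctl n).memLp) hmC
  have hHolder : ∀ n s t T, 0 ≤ s → s ≤ t → t ≤ T →
      dist (u n s) (u n t) ≤ √(ε * Real.exp (T / ε) * C) * √(t - s) := by
    intro n s t T hs hst htT
    refine ((hadm' n).2.2.2.1 s t hs hst).trans
      ((intervalIntegral_le_sqrt hε (hctl n).memLp hs hst htT).trans ?_)
    gcongr
    exact hmC n
  obtain ⟨j₂, w, hj₂, hconv⟩ := S.exists_pointwise_limit (x := x) (u := fun n => u (j₁ n))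
    (fun n => (hadm _).1)
    (fun T => ⟨_, Real.sqrt_nonneg _, fun n s t hs hst htT => hHolder _ s t T hs hst htT⟩)
    (fun a b ha hab => by
      obtain ⟨c, hc⟩ := exists_sublevel (φ := φ) (ustar := ustar) (A := A) (x := x) hε S.hB C ha hab
      exact ⟨c, fun n => hc _ _ (hEC _)⟩)
  -- relabel along the subsequence `J = j₁ ∘ j₂`
  set J : ℕ → ℕ := fun n => j₁ (j₂ n) with hJ
  have hJn : ∀ n, n ≤ J n := fun n => (hj₂.id_le n).trans (hj₁.id_le _)
  have hweak : ∀ h, MemLp h 2 (expMeasure ε) →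
      Tendsto (fun n => ∫ t, m (J n) t * h t ∂expMeasure ε) atTop
        (𝓝 (∫ t, g t * h t ∂expMeasure ε)) := fun h hh =>
    (hweak₁ h hh).comp hj₂.tendsto_atTop
  have hint : ∀ s t, 0 ≤ s → s ≤ t →
      Tendsto (fun n => ∫ r in s..t, m (J n) r) atTop (𝓝 (∫ r in s..t, g r)) := by
    intro s t hs hst
    obtain ⟨h, hh, hh2⟩ := exists_interval_test hε hs hst
    simpa only [hh2] using hweak h hh
  have hw0 : w 0 = x := by
    have h1 := hconv 0 le_rfl
    simp only [(hadm _).1] at h1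
    refine dist_le_zero.1 (S.dist_le _ _ _ _ (fun _ => 0) 0 h1
      (S.of_tendsto _ x tendsto_const_nhds) tendsto_const_nhds fun n => ?_)
    rw [dist_self]
  have hwd : ∀ s t, 0 ≤ s → s ≤ t → dist (w s) (w t) ≤ ∫ r in s..t, g r := fun s t hs hst =>
    S.dist_le _ _ _ _ _ _ (hconv s hs) (hconv t (hs.trans hst)) (hint s t hs hst)
      fun n => (hadm' _).2.2.2.1 s t hs hst
  have hctlw : Controlled ε x w g := controlled_of_dist_le hε hw0 hg hwd
  -- the linear correction in the expansion of the quadratic part around the weak limit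
  set lam : ℕ → ℝ := fun n =>
    ε * (∫ t, m (J n) t * g t ∂expMeasure ε - ∫ t, g t * g t ∂expMeasure ε) -
        2 * B * (∫ t, (∫ s in (0 : ℝ)..t, g s) * (∫ s in (0 : ℝ)..t, m (J n) s) ∂expMeasure ε -
          ∫ t, (∫ s in (0 : ℝ)..t, g s) * (∫ s in (0 : ℝ)..t, g s) ∂expMeasure ε) with hlam
  have hlam0 : Tendsto lam atTop (𝓝 0) := by
    obtain ⟨h, hh, hh2⟩ := exists_adjoint hε (hardy_real hε hg).1
    have h1 := ((hweak g hg).sub_const (∫ t, g t * g t ∂expMeasure ε)).const_mul ε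
    have h2 := ((hweak h hh).sub_const (∫ t, g t * h t ∂expMeasure ε)).const_mul (2 * B)
    have h3 := h1.sub h2
    simp only [sub_self, mul_zero] at h3
    refine h3.congr fun n => ?_
    rw [hlam]
    simp only
    rw [hh2 _ (hctl (J n)).memLp, hh2 _ hg]
  set qg := ∫ t, quadPart ε ustar A B x g t ∂expMeasure ε with hqg
  have hb : Tendsto (fun n : ℕ => V + 1 / ((n : ℝ) + 1) - qg - lam n) atTop (𝓝 (V - qg)) := by
    have := (((tendsto_one_div_add_atTop_nhds_zero_nat (𝕜 := ℝ)).const_add V).sub_const qg).sub hlam0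
    simpa using this
  have hEb : ∀ n, ∃ e : ℝ, 0 ≤ e ∧
      ∫⁻ t, shifted φ ustar A B x (u (J n)) (m (J n)) t ∂expMeasure ε = ENNReal.ofReal e ∧
      e ≤ V + 1 / ((n : ℝ) + 1) - qg - lam n := by
    intro n
    obtain ⟨e, he0, he1, he2⟩ := hEq (J n)
    refine ⟨e, he0, he1, ?_⟩
    have h1 := quadPart_expand (ustar := ustar) (A := A) (x := x) hε hεB S.hB (hctl (J n)).memLp hg
    have h2 : 1 / ((J n : ℝ) + 1) ≤ 1 / ((n : ℝ) + 1) := by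
      gcongr
      exact hJn n
    linarith
  have hVq : 0 ≤ V - qg := ge_of_tendsto' hb fun n => by
    obtain ⟨e, he0, -, he⟩ := hEb n
    exact he0.trans he
  have hfatou : ∫⁻ t, shifted φ ustar A B x w g t ∂expMeasure ε ≤ ENNReal.ofReal (V - qg) := by
    calc ∫⁻ t, shifted φ ustar A B x w g t ∂expMeasure ε
        ≤ ∫⁻ t, liminf (fun n => shifted φ ustar A B x (u (J n)) (m (J n)) t) atTop
            ∂expMeasure ε := by
          refine lintegral_mono_ae ?_
          filter_upwards [ae_expMeasure_pos ε] with t ht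
          refine S.shifted_le_liminf (U := fun n => u (J n)) (M := fun n => m (J n))
            (hconv t ht.le) ?_ (hint 0 t le_rfl ht.le)
          have hx0 : ∀ n, dist x (u (J n) t) ≤ √(ε * Real.exp (t / ε) * C) * √(t - 0) := by
            intro n
            have := hHolder (J n) 0 t t le_rfl ht.le le_rfl
            rwa [(hadm (J n)).1] at this
          exact ⟨_, fun n k => (dist_triangle_left _ _ x).trans (add_le_add (hx0 n) (hx0 k))⟩
      _ ≤ liminf (fun n => ∫⁻ t, shifted φ ustar A B x (u (J n)) (m (J n)) t ∂expMeasure ε) atTop :=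
          lintegral_liminf_le' fun n => S.aemeasurable_shifted hε (hctl (J n))
      _ ≤ liminf (fun n : ℕ => ENNReal.ofReal (V + 1 / ((n : ℝ) + 1) - qg - lam n)) atTop := by
          refine liminf_le_liminf (Eventually.of_forall fun n => ?_)
          obtain ⟨e, -, he1, he⟩ := hEb n
          simp only [he1]
          exact ENNReal.ofReal_le_ofReal he
      _ = ENNReal.ofReal (V - qg) := (ENNReal.tendsto_ofReal hb).liminf_eq
  have hle : WEDfun φ ε w g ≤ (V : EReal) := by
    rw [(S.eIntegral_eq hε hctlw).1]
    calc _ ≤ ((ENNReal.ofReal (V - qg) : ℝ≥0∞) : EReal) + (qg : EReal) := by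
          gcongr
          exact EReal.coe_ennreal_le_coe_ennreal_iff.2 hfatou
      _ = (V : EReal) := by
          rw [EReal.coe_ennreal_ofReal, max_eq_left hVq, ← EReal.coe_add, sub_add_cancel]
  obtain ⟨m', hm', hm'g⟩ := exists_admissible hε hw0 hg hwd
  refine ⟨w, m', isMinimizer_iff.2 ⟨hm', le_antisymm ?_ (Veps_le hm')⟩⟩
  rw [hV]
  exact (WEDfun_mono hε hm'g).trans hle

end
end WED

/-! ### Shifts, concatenations and the dynamic programming principle -/

namespace WED

section
variable {X : Type*} [MetricSpace X] {φ : X → EReal} {ustar : X} {A B ε T : ℝ}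
  {conv : (ℕ → X) → X → Prop} {x : X} {u v : ℝ → X} {m n : ℝ → ℝ}

theorem measurePreserving_add_restrict (c : ℝ) (s : Set ℝ) (hs : MeasurableSet s) :
    MeasurePreserving (fun t : ℝ => t + c) (volume.restrict ((fun t => t + c) ⁻¹' s))
      (volume.restrict s) :=
  (measurePreserving_add_right volume c).restrict_preimage hs

theorem memLp_of_sq (hm : AEStronglyMeasurable m (volume.restrict (Ioi 0)))
    (hfin : ∫⁻ t, ENNReal.ofReal (m t ^ 2) ∂expMeasure ε < ⊤) : MemLp m 2 (expMeasure ε) := by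
  have hmeas := hm.mono_ac (expMeasure_absolutelyContinuous ε)
  refine (memLp_two_iff_integrable_sq hmeas).2 ⟨hmeas.pow 2, ?_⟩
  rwa [hasFiniteIntegral_iff_ofReal (Eventually.of_forall fun t => sq_nonneg _)]

theorem lintegral_sq_shift_lt_top (hT : 0 < T)
    (h : ∫⁻ t, ENNReal.ofReal (m t ^ 2) ∂expMeasure ε < ⊤) :
    ∫⁻ t, ENNReal.ofReal (m (t + T) ^ 2) ∂expMeasure ε < ⊤ := by
  have h1 := (setLIntegral_le_lintegral (Ici T) _).trans_lt h
  rw [setLIntegral_Ici_expMeasure hT] at h1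
  refine (ENNReal.mul_lt_top_iff.1 h1).elim (fun h => h.2) fun h => h.elim (fun h => ?_) fun h => ?_
  · exact absurd h (by simpa using Real.exp_pos _)
  · rw [h]; exact ENNReal.zero_lt_top

theorem Admissible.aestronglyMeasurable (hε : 0 < ε) (h : Admissible ε x u m) :
    AEStronglyMeasurable m (volume.restrict (Ioi 0)) :=
  ((admissible_iff hε).1 h).2.2.1.1.mono_ac (restrict_absolutelyContinuous_expMeasure hε)

/-- Time-shifts of admissible curves are admissible. -/
theorem Admissible.shift (hε : 0 < ε) (hT : 0 < T) (h : Admissible ε x u m) :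
    Admissible ε (u T) (fun t => u (t + T)) (fun t => m (t + T)) := by
  have hmeas := h.aestronglyMeasurable hε
  obtain ⟨h0, hn, hL, hd, hlim⟩ := (admissible_iff hε).1 h
  have hpre : (fun t : ℝ => t + T) ⁻¹' Ioi T = Ioi 0 := by ext; simp
  have hmp := measurePreserving_add_restrict T (Ioi T) measurableSet_Ioi
  rw [hpre] at hmp
  have hle : volume.restrict (Ioi T) ≤ volume.restrict (Ioi 0) :=
    Measure.restrict_mono (Ioi_subset_Ioi hT.le) le_rfl
  refine (admissible_iff hε).2 ⟨by simp, fun t => hn _, ?_, fun s t hs hst => ?_, ?_⟩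
  · exact memLp_of_sq ((hmeas.mono_measure hle).comp_measurePreserving hmp)
      (lintegral_sq_shift_lt_top hT h.2.2)
  · rw [intervalIntegral.integral_comp_add_right]
    exact hd _ _ (by linarith) (by linarith)
  · have := hmp.quasiMeasurePreserving.ae (ae_mono hle hlim)
    filter_upwards [this] with t ht
    have h2 : Tendsto (fun s : ℝ => s + T) (𝓝[≠] t) (𝓝[≠] (t + T)) := by
      refine tendsto_nhdsWithin_of_tendsto_nhds_of_eventually_within _
        (((continuous_add_const T).tendsto t).mono_left nhdsWithin_le_nhds) ?_
      filter_upwards [self_mem_nhdsWithin] with s hs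
      simpa using hs
    have h3 := ht.comp h2
    refine h3.congr fun s => ?_
    simp

/-- Concatenation of `f` on `(-∞, T)` with `g` started at time `T`. -/
def concat {α : Type*} (T : ℝ) (f g : ℝ → α) (t : ℝ) : α := if t < T then f t else g (t - T)

theorem concat_of_lt {α : Type*} {f g : ℝ → α} {t : ℝ} (h : t < T) : concat T f g t = f t :=
  if_pos h

theorem concat_of_le {α : Type*} {f g : ℝ → α} {t : ℝ} (h : T ≤ t) :
    concat T f g t = g (t - T) := if_neg h.not_gt

theorem concat_add {α : Type*} {f g : ℝ → α} {t : ℝ} (h : 0 ≤ t) :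
    concat T f g (t + T) = g t := by
  rw [concat_of_le (by linarith), add_sub_cancel_right]

/-- Following `u` up to time `T` and then an admissible curve starting at `u T` is admissible. -/
theorem Admissible.concat (hε : 0 < ε) (hT : 0 < T) (hu : Admissible ε x u m)
    (hv : Admissible ε (u T) v n) : Admissible ε x (concat T u v) (concat T m n) := by
  have hmeas := hu.aestronglyMeasurable hε
  have hmeas' := hv.aestronglyMeasurable hε
  obtain ⟨h0, hn, hL, hd, hlim⟩ := (admissible_iff hε).1 hu
  obtain ⟨h0', hn', hL', hd', hlim'⟩ := (admissible_iff hε).1 hv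
  have hpre : (fun t : ℝ => t + -T) ⁻¹' Ioi 0 = Ioi T := by ext; simp
  have hmp := measurePreserving_add_restrict (-T) (Ioi 0) measurableSet_Ioi
  rw [hpre] at hmp
  have hk : MemLp (WED.concat T m n) 2 (expMeasure ε) := by
    refine memLp_of_sq ?_ ?_
    · refine AEStronglyMeasurable.piecewise (s := Iio T) measurableSet_Iio hmeas.restrict
        (g := fun t => n (t - T)) ?_
      rw [compl_Iio, Measure.restrict_restrict measurableSet_Ici,
        inter_eq_left.2 (show Ici T ⊆ Ioi 0 from fun t (ht : T ≤ t) => hT.trans_le ht),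
        Measure.restrict_congr_set Ioi_ae_eq_Ici.symm]
      exact hmeas'.comp_measurePreserving hmp
    · rw [← lintegral_add_compl _ (measurableSet_Iio (a := T)), compl_Iio,
        setLIntegral_Ici_expMeasure hT]
      refine ENNReal.add_lt_top.2 ⟨?_, ENNReal.mul_lt_top ENNReal.ofReal_lt_top ?_⟩
      · rw [setLIntegral_congr_fun (g := fun t => ENNReal.ofReal (m t ^ 2)) measurableSet_Iio
          (fun t ht => by simp only [concat_of_lt (mem_Iio.1 ht)])]
        exact (setLIntegral_le_lintegral _ _).trans_lt hu.2.2
      · refine lt_of_eq_of_lt (lintegral_congr_ae ?_) hv.2.2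
        filter_upwards [ae_expMeasure_pos ε] with t ht
        rw [concat_add ht.le]
  have hwT : WED.concat T u v T = u T := by
    rw [concat_of_le le_rfl, sub_self, h0']
  have hleft : ∀ s t, 0 ≤ s → s ≤ t → t ≤ T →
      dist (WED.concat T u v s) (WED.concat T u v t) ≤ ∫ r in s..t, WED.concat T m n r := by
    intro s t hs hst ht
    have hw : ∀ r ≤ T, WED.concat T u v r = u r := by
      intro r hr
      rcases hr.eq_or_lt with rfl | hr
      · exact hwT
      · exact concat_of_lt hr
    rw [hw s (hst.trans ht), hw t ht]
    refine (hd s t hs hst).trans_eq (intervalIntegral.integral_congr_ae ?_)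
    filter_upwards [Measure.ae_ne volume T] with r hr hr'
    rw [uIoc_of_le hst] at hr'
    rw [concat_of_lt ((hr'.2.trans ht).lt_of_ne hr)]
  have hright : ∀ s t, T ≤ s → s ≤ t →
      dist (WED.concat T u v s) (WED.concat T u v t) ≤ ∫ r in s..t, WED.concat T m n r := by
    intro s t hs hst
    rw [concat_of_le hs, concat_of_le (hs.trans hst)]
    refine (hd' (s - T) (t - T) (by linarith) (by linarith)).trans_eq ?_
    rw [← intervalIntegral.integral_comp_sub_right]
    refine intervalIntegral.integral_congr fun r hr => ?_
    rw [uIcc_of_le hst] at hr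
    exact (concat_of_le (hs.trans hr.1)).symm
  refine (admissible_iff hε).2 ⟨?_, fun t => ?_, hk, fun s t hs hst => ?_, ?_⟩
  · rw [concat_of_lt hT, h0]
  · unfold WED.concat
    split_ifs
    exacts [hn _, hn' _]
  · rcases le_total t T with htT | htT
    · exact hleft s t hs hst htT
    rcases le_total T s with hsT | hsT
    · exact hright s t hsT hst
    · refine (dist_triangle _ (WED.concat T u v T) _).trans ?_
      rw [← intervalIntegral.integral_add_adjacent_intervals
        (intervalIntegrable_of_memLp hε hk hs hT.le)
        (intervalIntegrable_of_memLp hε hk hT.le (hs.trans hst))]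
      exact add_le_add (hleft s T hs hsT le_rfl) (hright T t le_rfl htT)
  · have h1 := hmp.quasiMeasurePreserving.ae hlim'
    rw [ae_restrict_iff' measurableSet_Ioi] at h1 hlim ⊢
    filter_upwards [h1, hlim, Measure.ae_ne volume T] with t ht1 ht2 hne ht0
    rcases hne.lt_or_gt with hlt | hgt
    · rw [concat_of_lt hlt, concat_of_lt hlt]
      refine (ht2 ht0).congr' ?_
      filter_upwards [mem_nhdsWithin_of_mem_nhds (Iio_mem_nhds hlt)] with s hs
      rw [concat_of_lt (mem_Iio.1 hs)]
    · rw [concat_of_le hgt.le, concat_of_le hgt.le]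
      have h2 : Tendsto (fun s : ℝ => s + -T) (𝓝[≠] t) (𝓝[≠] (t + -T)) := by
        refine tendsto_nhdsWithin_of_tendsto_nhds_of_eventually_within _
          (((continuous_add_const (-T)).tendsto t).mono_left nhdsWithin_le_nhds) ?_
        filter_upwards [self_mem_nhdsWithin] with s hs
        simpa using hs
      refine ((ht1 hgt).comp h2).congr' ?_
      filter_upwards [mem_nhdsWithin_of_mem_nhds (Ioi_mem_nhds hgt)] with s hs
      rw [concat_of_le (le_of_lt (mem_Ioi.1 hs))]
      simp [sub_eq_add_neg]

/-- The tail of an integral against `μ_ε` is `e^{-T/ε}` times the integral of the shifted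
function. -/
theorem eIntegral_Ici (hT : 0 < T) {f : ℝ → EReal}
    (hN : ∫⁻ t, epos (-f (t + T)) ∂expMeasure ε ≠ ⊤) :
    eIntegral ((expMeasure ε).restrict (Ici T)) f =
      ((Real.exp (-T / ε) : ℝ) : EReal) * eIntegral (expMeasure ε) (fun t => f (t + T)) := by
  unfold eIntegral
  rw [setLIntegral_Ici_expMeasure hT, setLIntegral_Ici_expMeasure hT]
  generalize ∫⁻ t, epos (-f (t + T)) ∂expMeasure ε = N at *
  generalize ∫⁻ t, epos (f (t + T)) ∂expMeasure ε = P at *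
  have he : 0 < Real.exp (-T / ε) := Real.exp_pos _
  generalize Real.exp (-T / ε) = e at *
  rw [EReal.coe_ennreal_mul, EReal.coe_ennreal_mul, EReal.coe_ennreal_ofReal, max_eq_left he.le]
  lift N to NNReal using hN
  have hc : ∀ r : NNReal, (((r : ℝ≥0∞)) : EReal) = ((r : ℝ) : EReal) := fun _ => rfl
  rw [hc, ← EReal.coe_mul]
  induction P with
  | top =>
    rw [EReal.coe_ennreal_top, EReal.coe_mul_top_of_pos he, EReal.top_sub_coe, EReal.top_sub_coe,
      EReal.coe_mul_top_of_pos he]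
  | coe P =>
    rw [hc, ← EReal.coe_mul, ← EReal.coe_sub, ← EReal.coe_sub, ← EReal.coe_mul, mul_sub]

/-- The energy up to time `T` plus `e^{-T/ε}` times the energy of the shifted curve. -/
theorem SeqSetting.WEDfun_split (S : SeqSetting φ ustar A B conv) (hε : 0 < ε) (hT : 0 < T)
    (h : Admissible ε x u m) :
    WEDfun φ ε u m = eIntegral ((expMeasure ε).restrict (Iio T)) (wedIntegrand φ ε u m) +
      ((Real.exp (-T / ε) : ℝ) : EReal) *
        WEDfun φ ε (fun t => u (t + T)) (fun t => m (t + T)) := by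
  have hN := (S.eIntegral_eq hε (h.controlled hε)).2
  have hN' := (S.eIntegral_eq hε ((h.shift hε hT).controlled hε)).2
  rw [WEDfun, eIntegral_split measurableSet_Iio hN, compl_Iio, eIntegral_Ici hT hN']
  rfl

theorem SeqSetting.eIntegral_Iio_ne_bot (S : SeqSetting φ ustar A B conv) (hε : 0 < ε)
    (h : Admissible ε x u m) :
    eIntegral ((expMeasure ε).restrict (Iio T)) (wedIntegrand φ ε u m) ≠ ⊥ := by
  have hN := (S.eIntegral_eq hε (h.controlled hε)).2
  have h1 : ∫⁻ t in Iio T, epos (-wedIntegrand φ ε u m t) ∂expMeasure ε ≠ ⊤ :=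
    ne_top_of_le_ne_top hN (setLIntegral_le_lintegral _ _)
  unfold eIntegral
  generalize ∫⁻ t in Iio T, epos (-wedIntegrand φ ε u m t) ∂expMeasure ε = N at *
  lift N to NNReal using h1
  rw [sub_eq_add_neg, Ne, EReal.add_eq_bot_iff]
  rintro (h | h)
  · exact EReal.coe_ennreal_ne_bot _ h
  · rw [EReal.neg_eq_bot_iff] at h
    exact absurd h (by simp)

/-- The inequality `≤` of the dynamic programming principle: after time `T`, any competitor may be
replaced by a minimizer started at `u T`. -/
theorem SeqSetting.Veps_le_split [CompleteSpace X] (S : SeqSetting φ ustar A B conv) (hε : 0 < ε)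
    (hεB : B ≤ 1 / (16 * ε)) (hT : 0 < T) (h : Admissible ε x u m) :
    Veps φ ε x ≤ eIntegral ((expMeasure ε).restrict (Iio T)) (wedIntegrand φ ε u m)
      + ((Real.exp (-T / ε) : ℝ) : EReal) * Veps φ ε (u T) := by
  by_cases hV : Veps φ ε (u T) = ⊤
  · rw [hV, EReal.coe_mul_top_of_pos (Real.exp_pos _),
      EReal.add_top_of_ne_bot (S.eIntegral_Iio_ne_bot hε h)]
    exact le_top
  obtain ⟨v, n, hmin⟩ := S.exists_minimizer hε hεB hV
  obtain ⟨hv, hveq⟩ := isMinimizer_iff.1 hmin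
  have hw := h.concat hε hT hv
  refine (Veps_le hw).trans_eq ?_
  rw [S.WEDfun_split hε hT hw, ← hveq]
  congr 1
  · refine eIntegral_congr ?_
    filter_upwards [ae_restrict_mem measurableSet_Iio] with t ht
    simp only [wedIntegrand, concat_of_lt (mem_Iio.1 ht)]
  · congr 1
    refine eIntegral_congr ?_
    filter_upwards [ae_expMeasure_pos ε] with t ht
    simp only [wedIntegrand, concat_add (le_of_lt ht)]

/-- For a minimizer all the inequalities of the dynamic programming principle are equalities. -/
theorem SeqSetting.minimizer_split [CompleteSpace X] (S : SeqSetting φ ustar A B conv) (hε : 0 < ε)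
    (hεB : B ≤ 1 / (16 * ε)) (hx : Veps φ ε x ≠ ⊤) (hT : 0 < T) (h : IsMinimizer φ ε x u m) :
    eIntegral ((expMeasure ε).restrict (Iio T)) (wedIntegrand φ ε u m)
        + ((Real.exp (-T / ε) : ℝ) : EReal) * Veps φ ε (u T) = Veps φ ε x ∧
      IsMinimizer φ ε (u T) (fun t => u (t + T)) (fun t => m (t + T)) := by
  obtain ⟨hu, hueq⟩ := isMinimizer_iff.1 h
  have hsh := hu.shift hε hT
  have h1 := S.Veps_le_split hε hεB hT hu
  have h2 : Veps φ ε (u T) ≤ WEDfun φ ε (fun t => u (t + T)) (fun t => m (t + T)) := Veps_le hsh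
  have h3 := S.WEDfun_split hε hT hu
  have hbot := S.Veps_ne_bot hε hεB (u T)
  have hxbot := S.Veps_ne_bot hε hεB x
  have habot := S.eIntegral_Iio_ne_bot (T := T) hε hu
  have he : 0 < Real.exp (-T / ε) := Real.exp_pos _
  suffices H : WEDfun φ ε (fun t => u (t + T)) (fun t => m (t + T)) = Veps φ ε (u T) by
    refine ⟨?_, isMinimizer_iff.2 ⟨hsh, H⟩⟩
    rw [← hueq, h3, H]
  rw [hueq] at h3
  generalize WEDfun φ ε (fun t => u (t + T)) (fun t => m (t + T)) = W at *
  generalize eIntegral ((expMeasure ε).restrict (Iio T)) (wedIntegrand φ ε u m) = a at *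
  generalize Veps φ ε (u T) = V at *
  generalize Veps φ ε x = Vx at *
  generalize Real.exp (-T / ε) = e at *
  have hWbot : W ≠ ⊥ := ne_bot_of_le_ne_bot hbot h2
  have hWtop : W ≠ ⊤ := by
    rintro rfl
    rw [EReal.coe_mul_top_of_pos he, EReal.add_top_of_ne_bot habot] at h3
    exact hx h3
  lift W to ℝ using ⟨hWtop, hWbot⟩
  lift V to ℝ using ⟨ne_top_of_le_ne_top hWtop h2, hbot⟩
  have hatop : a ≠ ⊤ := by
    rintro rfl
    rw [← EReal.coe_mul, EReal.top_add_coe] at h3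
    exact hx h3
  lift a to ℝ using ⟨hatop, habot⟩
  rw [h3] at h1
  norm_cast at h1 h2 ⊢
  exact le_antisymm (le_of_mul_le_mul_left (by linarith) he) h2

end
end WED

namespace WED

/-- Proposition 4.2, Dynamic Programming Principle: for `x ∈ D(V_ε)` and
every `T > 0`, `V_ε(x)` equals the minimum over `𝒜_x^ε` of
`∫₀^T ((ε/2)|u'|² + φ(u)) dμ_ε + V_ε(u(T)) e^{-T/ε}` (and the minimum is attained); every
WED minimizer realizes this minimum for all `T > 0`, and its time-shift by `T` is a WED
minimizer from `u_ε(T)`. -/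
theorem statement10
    {X : Type*} [MetricSpace X] [CompleteSpace X]
    (σ : TopologicalSpace X) (hcomp : Compatible σ)
    (φ : X → EReal) (ustar : X) (A B : ℝ) (hφ : LSCC σ φ ustar A B)
    (ε : ℝ) (hε : 0 < ε) (hεB : B ≤ 1 / (16 * ε))
    (x : X) (hx : Veps φ ε x ≠ ⊤) :
    ∀ T : ℝ, 0 < T →
      (∀ (u : ℝ → X) (m : ℝ → ℝ), Admissible ε x u m →
        Veps φ ε x ≤ eIntegral ((expMeasure ε).restrict (Iio T)) (wedIntegrand φ ε u m)
          + ((Real.exp (-T / ε) : ℝ) : EReal) * Veps φ ε (u T)) ∧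
      (∃ (u : ℝ → X) (m : ℝ → ℝ), Admissible ε x u m ∧
        eIntegral ((expMeasure ε).restrict (Iio T)) (wedIntegrand φ ε u m)
          + ((Real.exp (-T / ε) : ℝ) : EReal) * Veps φ ε (u T) = Veps φ ε x) ∧
      (∀ (u : ℝ → X) (m : ℝ → ℝ), IsMinimizer φ ε x u m →
        eIntegral ((expMeasure ε).restrict (Iio T)) (wedIntegrand φ ε u m)
          + ((Real.exp (-T / ε) : ℝ) : EReal) * Veps φ ε (u T) = Veps φ ε x ∧
        IsMinimizer φ ε (u T) (fun t => u (t + T)) (fun t => m (t + T))) := by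
  intro T hT
  have S := LSCC.seqSetting hcomp hφ
  refine ⟨fun u m h => S.Veps_le_split hε hεB hT h, ?_,
    fun u m h => S.minimizer_split hε hεB hx hT h⟩
  obtain ⟨u, m, h⟩ := S.exists_minimizer hε hεB hx
  exact ⟨u, m, h.1, (S.minimizer_split hε hεB hx hT h).1⟩

end WED
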